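/- Let k > 9/2. There exists a constant C depending only on k such that for all Schwartz functions f, g, h on ℝ³: | ⟨Q(g,f), h⟨v⟩^{2k}⟩ | ≤ C ‖g‖_{L²_k} ( ‖f⟨v⟩^k‖_{𝖧¹_A} ‖h⟨v⟩^k‖_{𝖧¹_A} + ‖f‖_{H¹_{k−2}} ‖h‖_{L²_k} ). -/

import Mathlib

/-!
Integrating by parts, `⟨Q(g,f), H⟩` with `H = h⟨v⟩^{2k}` becomes `-∑_i ∫ (flux)_i ∂_i H`
(`pairL_eq_weakT`). The kernel `a(z)`, the Hessian of `|z|`, is replaced by the Hessian `aE ε` of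
`(ε + |z|²)^{1/2}`, which is smooth and bounded together with its derivatives; the original weak
form is the limit `ε → 0` (`tendsto_weakT`), so a bound uniform in `ε ∈ (0, 1]` suffices.

For the regularized kernel the derivative of `g` is moved onto the kernel, which produces the drift
`bE ε ≈ -2 z |z|⁻³`. Its long-range part `bF = -2 z ⟨z⟩⁻³` decays too slowly to be paired with
`∇H`; it is integrated by parts in `v` and contributes the term `‖f‖_{H¹_{k-2}} ‖h‖_{L²_k}`. The
weak form is then `∬ Theta(v, v - w) g(w) dv dw` (`weakT_eq`).

Pointwise (`Theta_bound`), with `F = f⟨v⟩^k`, `G = h⟨v⟩^k`, the quadratic form of `a(z)` is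
`|z|⁻³ (z × ∇f) · (z × ∇H)`. Writing `z = v - w`, the products `v × ∇` are the rotational
derivatives of the anisotropic norm, so that for `|z|` large the form is bounded by
`⟨w⟩³ ⟨v⟩⁻³` times densities of the norms of `F` and `G`. The local singularities are `|z|⁻¹` for
the diffusion and `|z|⁻²` for the drift.

In the resulting double integral (`bilinear_bound`) the singularity `|v - w|⁻¹` is square
integrable near zero and is absorbed by `g ∈ L²`; for `|v - w|⁻²`, the Hardy inequality (`hardy`)
applied to `⟨v⟩^{-3/2} F` absorbs one more factor `|v - w|⁻¹`. Finally `⟨w⟩³ g` is in `L¹` with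
norm at most `C ‖g‖_{L²_k}` since `⟨w⟩^{3-k}` is square integrable for `k > 9/2`
(`lintegral_weight`).
-/

open MeasureTheory Real Finset

noncomputable section

abbrev E3 := EuclideanSpace ℝ (Fin 3)

/-- The Japanese bracket `⟨v⟩ = √(1+|v|²)`. -/
def jap (v : E3) : ℝ := Real.sqrt (1 + ‖v‖ ^ 2)

/-- The projection matrix `Π(z)` with entries `δ_ij − z_i z_j / |z|²`. -/
def Pi3 (z : E3) : Matrix (Fin 3) (Fin 3) ℝ :=
  Matrix.of fun i j => (if i = j then (1 : ℝ) else 0) - z i * z j / ‖z‖ ^ 2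

/-- The Coulomb Landau kernel `a(z) = |z|⁻¹ Π(z)`. -/
def aK (z : E3) : Matrix (Fin 3) (Fin 3) ℝ :=
  Matrix.of fun i j => ‖z‖⁻¹ * Pi3 z i j

/-- Partial derivative `∂_i f`. -/
def pd (i : Fin 3) (f : E3 → ℝ) : E3 → ℝ :=
  fun v => fderiv ℝ f v (EuclideanSpace.single i 1)

/-- The Landau collision operator with Coulomb potential:
`Q(g,h)(v) = ∇_v · ∫ a(v−v*) ( g(v*) ∇h(v) − ∇g(v*) h(v) ) dv*`. -/
def landauQ (g h : E3 → ℝ) : E3 → ℝ := fun v =>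
  ∑ i : Fin 3, fderiv ℝ (fun w =>
      ∫ vs : E3, ∑ j : Fin 3, aK (w - vs) i j * (g vs * pd j h w - pd j g vs * h w)) v
    (EuclideanSpace.single i 1)

/-- The pairing `⟨f,g⟩ = ∫ f g dv`. -/
def pairL (f g : E3 → ℝ) : ℝ := ∫ v : E3, f v * g v

/-- Weighted Lebesgue norm `‖f‖_{L^p_l} = (∫ |f|^p ⟨v⟩^{lp})^{1/p}`. -/
def Lpl (p l : ℝ) (f : E3 → ℝ) : ℝ :=
  (∫ v : E3, |f v| ^ p * jap v ^ (l * p)) ^ (1 / p)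

/-- Iterated partial derivative in direction `i`. -/
def pdPow (i : Fin 3) : ℕ → (E3 → ℝ) → E3 → ℝ
  | 0, f => f
  | n + 1, f => pd i (pdPow i n f)

/-- Multi-index partial derivative `∂^m f`. -/
def pdM (m : Fin 3 → ℕ) (f : E3 → ℝ) : E3 → ℝ :=
  pdPow 0 (m 0) (pdPow 1 (m 1) (pdPow 2 (m 2) f))

/-- Multi-indices `m` with `|m| ≤ n`. -/
def multiIdx (n : ℕ) : Finset (Fin 3 → ℕ) :=
  (Fintype.piFinset fun _ : Fin 3 => Finset.range (n + 1)).filter fun m => (∑ i, m i) ≤ n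

/-- Square of the weighted Sobolev norm `‖f‖²_{H^n_l} = Σ_{|m|≤n} ‖∂^m f‖²_{L²_l}`. -/
def HSobSq (n : ℕ) (l : ℝ) (f : E3 → ℝ) : ℝ :=
  ∑ m ∈ multiIdx n, (Lpl 2 l (pdM m f)) ^ 2

/-- Weighted Sobolev norm `‖f‖_{H^n_l}`. -/
def HSob (n : ℕ) (l : ℝ) (f : E3 → ℝ) : ℝ :=
  Real.sqrt (HSobSq n l f)

/-- Rotational derivative `(v_i ∂_j − v_j ∂_i) f`. -/
def rotD (i j : Fin 3) (f : E3 → ℝ) : E3 → ℝ :=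
  fun v => v i * pd j f v - v j * pd i f v

/-- Square of the anisotropic norm
`‖f‖²_{𝖧¹_A} = Σ_{i<j} ‖(v_i ∂_j − v_j ∂_i) f‖²_{L²_{−3/2}} + ‖f‖²_{H¹_{−3/2}}`. -/
def HAsq (f : E3 → ℝ) : ℝ :=
  (∑ p ∈ Finset.univ.filter (fun p : Fin 3 × Fin 3 => p.1 < p.2),
    (Lpl 2 (-(3/2)) (rotD p.1 p.2 f)) ^ 2) + HSobSq 1 (-(3/2)) f

/-- The anisotropic norm `‖f‖_{𝖧¹_A}`. -/
def HA (f : E3 → ℝ) : ℝ := Real.sqrt (HAsq f)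

end

open scoped SchwartzMap LineDeriv ENNReal

/-! ### The Japanese bracket and Schwartz functions -/

lemma one_le_jap (v : E3) : 1 ≤ jap v := by
  unfold jap
  rw [Real.one_le_sqrt]
  nlinarith [sq_nonneg ‖v‖]

lemma jap_pos (v : E3) : 0 < jap v := lt_of_lt_of_le one_pos (one_le_jap v)

lemma jap_sq (v : E3) : jap v ^ 2 = 1 + ‖v‖ ^ 2 := by
  unfold jap
  rw [Real.sq_sqrt (by positivity)]

lemma norm_le_jap (v : E3) : ‖v‖ ≤ jap v := by
  unfold jap
  apply Real.le_sqrt_of_sq_le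
  linarith

lemma jap_le_add (v w : E3) : jap v ≤ jap w + ‖v - w‖ := by
  have h1 : ‖v‖ ≤ ‖w‖ + ‖v - w‖ := by
    have := norm_add_le w (v - w)
    simpa using this
  have h2 := norm_le_jap w
  have h3 := jap_pos w
  have h4 := jap_sq w
  have h5 := jap_sq v
  refine abs_le_of_sq_le_sq' ?_ (by positivity) |>.2
  rw [h5]
  nlinarith [norm_nonneg v, norm_nonneg w, norm_nonneg (v - w)]

lemma jap_rpow_eq (s : ℝ) (v : E3) : jap v ^ s = (1 + ‖v‖ ^ 2) ^ (s / 2) := by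
  unfold jap
  rw [Real.sqrt_eq_rpow, ← Real.rpow_mul (by positivity)]
  congr 1
  ring

lemma jap_rpow_tg (s : ℝ) : (fun v : E3 => jap v ^ s).HasTemperateGrowth := by
  have h := Function.hasTemperateGrowth_one_add_norm_sq_rpow E3 (s / 2)
  have e : (fun v : E3 => jap v ^ s) = fun v => (1 + ‖v‖ ^ 2) ^ (s / 2) :=
    funext fun v => jap_rpow_eq s v
  rw [e]
  exact h

lemma continuous_jap : Continuous jap := by
  unfold jap
  fun_prop

lemma abs_coord_le (v : E3) (i : Fin 3) : |v i| ≤ ‖v‖ := by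
  have := PiLp.norm_apply_le v i
  simpa using this

lemma norm_sq_coord (v : E3) : ‖v‖ ^ 2 = v 0 ^ 2 + v 1 ^ 2 + v 2 ^ 2 := by
  rw [EuclideanSpace.norm_sq_eq]
  simp [Fin.sum_univ_three]

/-- The unit coordinate vector `e_i`. -/
noncomputable abbrev ee (i : Fin 3) : E3 := EuclideanSpace.single i 1

/-- `∂_i f` as a Schwartz function. -/
noncomputable def pdS (i : Fin 3) (f : 𝓢(E3, ℝ)) : 𝓢(E3, ℝ) := ∂_{ee i} f

lemma pdS_coe (i : Fin 3) (f : 𝓢(E3, ℝ)) : ⇑(pdS i f) = pd i ⇑f := by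
  ext v
  exact SchwartzMap.lineDerivOp_apply_eq_fderiv _ _ _

/-- The Schwartz function `⟨v⟩^s f`. -/
noncomputable def wS (s : ℝ) (f : 𝓢(E3, ℝ)) : 𝓢(E3, ℝ) :=
  SchwartzMap.smulLeftCLM ℝ (fun v : E3 => jap v ^ s) f

lemma wS_apply (s : ℝ) (f : 𝓢(E3, ℝ)) (v : E3) : wS s f v = jap v ^ s * f v := by
  unfold wS
  rw [SchwartzMap.smulLeftCLM_apply_apply (jap_rpow_tg s)]
  rfl

/-- The product of two Schwartz functions. -/
noncomputable def mulS (f g : 𝓢(E3, ℝ)) : 𝓢(E3, ℝ) := SchwartzMap.smulLeftCLM ℝ (⇑f) g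

lemma mulS_apply (f g : 𝓢(E3, ℝ)) (v : E3) : mulS f g v = f v * g v := by
  unfold mulS
  rw [SchwartzMap.smulLeftCLM_apply_apply f.hasTemperateGrowth]
  rfl

lemma pd_mul {f g : E3 → ℝ} {v : E3} (i : Fin 3) (hf : DifferentiableAt ℝ f v)
    (hg : DifferentiableAt ℝ g v) :
    pd i (fun w => f w * g w) v = f v * pd i g v + pd i f v * g v := by
  unfold pd
  rw [fderiv_fun_mul hf hg]
  simp
  ring

lemma pd_jap_rpow (s : ℝ) (i : Fin 3) (v : E3) :
    pd i (fun w => jap w ^ s) v = s * v i * jap v ^ (s - 2) := by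
  have e : (fun w : E3 => jap w ^ s) = fun w => (1 + ‖w‖ ^ 2) ^ (s / 2) :=
    funext fun v => jap_rpow_eq s v
  unfold pd
  rw [e]
  have h1 : HasFDerivAt (fun w : E3 => 1 + ‖w‖ ^ 2) (2 • innerSL ℝ v) v :=
    ((hasStrictFDerivAt_norm_sq v).hasFDerivAt).const_add 1
  have h2 := h1.rpow_const (p := s / 2) (Or.inl (by positivity))
  rw [h2.fderiv, jap_rpow_eq]
  simp [EuclideanSpace.inner_single_right]
  rw [show (s - 2) / 2 = s / 2 - 1 by ring]
  ring

lemma pd_wS (s : ℝ) (f : 𝓢(E3, ℝ)) (i : Fin 3) (v : E3) :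
    pd i (⇑(wS s f)) v = jap v ^ s * (pd i (⇑f) v + s * v i * jap v ^ (-2 : ℝ) * f v) := by
  have e : ⇑(wS s f) = fun w => jap w ^ s * f w := funext (wS_apply s f)
  rw [e, pd_mul i ((jap_rpow_tg s).1.differentiable (by simp) v) f.differentiableAt,
    pd_jap_rpow, sub_eq_add_neg, Real.rpow_add (jap_pos v)]
  ring

/-! ### Regularized kernels -/

/-- `ρ_ε(z) = (ε + |z|²)^{-1/2}`, the regularization of `|z|⁻¹`. -/
noncomputable def rho (ε : ℝ) (z : E3) : ℝ := (Real.sqrt (ε + ‖z‖ ^ 2))⁻¹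

lemma rho_nonneg (ε : ℝ) (z : E3) : 0 ≤ rho ε z := by unfold rho; positivity

lemma rho_sq {ε : ℝ} (hε : 0 < ε) (z : E3) : (ε + ‖z‖ ^ 2) * rho ε z ^ 2 = 1 := by
  unfold rho
  rw [inv_pow, Real.sq_sqrt (by positivity)]
  field_simp

lemma rho_pos {ε : ℝ} (hε : 0 < ε) (z : E3) : 0 < rho ε z := by unfold rho; positivity

lemma norm_mul_rho_le {ε : ℝ} (hε : 0 < ε) (z : E3) : ‖z‖ * rho ε z ≤ 1 := by
  refine abs_le_of_sq_le_sq' ?_ (by positivity) |>.2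
  have := rho_sq hε z
  nlinarith [mul_nonneg hε.le (sq_nonneg (rho ε z))]

lemma eps_mul_rho_sq_le {ε : ℝ} (hε : 0 < ε) (z : E3) : ε * rho ε z ^ 2 ≤ 1 := by
  have := rho_sq hε z
  nlinarith [mul_nonneg (sq_nonneg ‖z‖) (sq_nonneg (rho ε z))]

lemma rho_le_eps {ε : ℝ} (hε : 0 < ε) (z : E3) : rho ε z ≤ (Real.sqrt ε)⁻¹ := by
  unfold rho
  gcongr
  nlinarith [sq_nonneg ‖z‖]

lemma coord_mul_rho_le {ε : ℝ} (hε : 0 < ε) (z : E3) (i : Fin 3) : |z i * rho ε z| ≤ 1 := by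
  rw [abs_mul, abs_of_nonneg (rho_nonneg ε z)]
  exact (mul_le_mul_of_nonneg_right (abs_coord_le z i) (rho_nonneg ε z)).trans
    (norm_mul_rho_le hε z)

lemma hasFDerivAt_rho {ε : ℝ} (hε : 0 < ε) (z : E3) :
    HasFDerivAt (rho ε) (-(rho ε z ^ 3) • innerSL ℝ z) z := by
  have h1 : HasFDerivAt (fun w : E3 => ε + ‖w‖ ^ 2) (2 • innerSL ℝ z) z :=
    ((hasStrictFDerivAt_norm_sq z).hasFDerivAt).const_add ε
  have h2 := (h1.sqrt (by positivity))
  have hs : 0 < √(ε + ‖z‖ ^ 2) := by positivity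
  have h3 := (hasDerivAt_inv hs.ne').comp_hasFDerivAt z h2
  refine h3.congr_fderiv ?_
  ext w
  simp [rho]
  field_simp

lemma differentiable_rho {ε : ℝ} (hε : 0 < ε) : Differentiable ℝ (rho ε) :=
  fun z => (hasFDerivAt_rho hε z).differentiableAt

lemma differentiable_coord (i : Fin 3) : Differentiable ℝ (fun z : E3 => z i) := by
  fun_prop

lemma pd_rho {ε : ℝ} (hε : 0 < ε) (z : E3) (i : Fin 3) :
    pd i (rho ε) z = - z i * rho ε z ^ 3 := by
  unfold pd
  rw [(hasFDerivAt_rho hε z).fderiv]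
  simp [EuclideanSpace.inner_single_right]
  ring

lemma pd_coord (i j : Fin 3) (z : E3) :
    pd j (fun z : E3 => z i) z = if i = j then 1 else 0 := by
  unfold pd
  have h : HasFDerivAt (fun z : E3 => z i) (EuclideanSpace.proj i : E3 →L[ℝ] ℝ) z :=
    (EuclideanSpace.proj i : E3 →L[ℝ] ℝ).hasFDerivAt
  rw [h.fderiv]
  simp

lemma pd_rho_pow {ε : ℝ} (hε : 0 < ε) (n : ℕ) (z : E3) (i : Fin 3) :
    pd i (fun z => rho ε z ^ n) z = - n * z i * rho ε z ^ (n + 2) := by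
  have h := pd_rho hε z i
  unfold pd at h ⊢
  rw [fderiv_fun_pow _ (differentiable_rho hε z)]
  simp only [smul_apply, smul_eq_mul, nsmul_eq_mul]
  rw [h]
  rcases n with _ | n
  · simp
  · simp
    ring

/-- The regularized Landau kernel: the Hessian of `(ε + |z|²)^{1/2}`. -/
noncomputable def aE (ε : ℝ) (i j : Fin 3) (z : E3) : ℝ :=
  (if i = j then 1 else 0) * rho ε z ^ 1 - z i * z j * rho ε z ^ 3

/-- The divergence `∑_j ∂_j a^ε_ij` of the regularized kernel. -/
noncomputable def bE (ε : ℝ) (i : Fin 3) (z : E3) : ℝ :=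
  -2 * z i * rho ε z ^ 3 - 3 * ε * z i * rho ε z ^ 5

/-- The smooth long-range part `-2 z_i ⟨z⟩⁻³` of the kernel `∑_j ∂_j a_ij = -2 z_i |z|⁻³`. -/
noncomputable def bF (i : Fin 3) (z : E3) : ℝ := z i * (-2 * rho 1 z ^ 3)

/-- `∂_i` of the long-range part `bF i`. -/
noncomputable def dF (i : Fin 3) (z : E3) : ℝ := -2 * rho 1 z ^ 3 + 6 * z i ^ 2 * rho 1 z ^ 5

lemma differentiable_aE {ε : ℝ} (hε : 0 < ε) (i j : Fin 3) : Differentiable ℝ (aE ε i j) := by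
  have := differentiable_rho hε
  unfold aE
  fun_prop

lemma differentiable_bE {ε : ℝ} (hε : 0 < ε) (i : Fin 3) : Differentiable ℝ (bE ε i) := by
  have := differentiable_rho hε
  unfold bE
  fun_prop

lemma differentiable_bF (i : Fin 3) : Differentiable ℝ (bF i) := by
  have := differentiable_rho one_pos
  unfold bF
  fun_prop

lemma pd_sub {f g : E3 → ℝ} {v : E3} (i : Fin 3) (hf : DifferentiableAt ℝ f v)
    (hg : DifferentiableAt ℝ g v) :
    pd i (fun w => f w - g w) v = pd i f v - pd i g v := by
  unfold pd
  rw [fderiv_fun_sub hf hg]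
  simp

lemma pd_const_mul {f : E3 → ℝ} {v : E3} (i : Fin 3) (c : ℝ) (hf : DifferentiableAt ℝ f v) :
    pd i (fun w => c * f w) v = c * pd i f v := by
  unfold pd
  rw [fderiv_const_mul hf]
  simp

lemma pd_aE {ε : ℝ} (hε : 0 < ε) (i j l : Fin 3) (z : E3) :
    pd l (aE ε i j) z = -(if i = j then 1 else 0) * z l * rho ε z ^ 3
      - ((if i = l then 1 else 0) * z j + z i * (if j = l then 1 else 0)) * rho ε z ^ 3
      + 3 * z i * z j * z l * rho ε z ^ 5 := by
  have hr := differentiable_rho hε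
  unfold aE
  rw [pd_sub l (by fun_prop) (by fun_prop), pd_const_mul l _ (by fun_prop),
    pd_mul l (by fun_prop) (by fun_prop), pd_mul l (by fun_prop) (by fun_prop),
    pd_rho_pow hε, pd_rho_pow hε, pd_coord, pd_coord]
  push_cast
  ring

lemma pd_bF (i l : Fin 3) (z : E3) :
    pd l (bF i) z = (if i = l then 1 else 0) * (-2 * rho 1 z ^ 3)
      + 6 * z i * z l * rho 1 z ^ 5 := by
  have hr := differentiable_rho one_pos
  unfold bF
  rw [pd_mul l (by fun_prop) (by fun_prop), pd_const_mul l _ (by fun_prop), pd_rho_pow one_pos,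
    pd_coord]
  push_cast
  ring

lemma pd_bF_self (i : Fin 3) (z : E3) : pd i (bF i) z = dF i z := by
  rw [pd_bF, dF, if_pos rfl]
  ring

lemma sum_dF (z : E3) : ∑ i, dF i z = -6 * rho 1 z ^ 5 := by
  have h := rho_sq one_pos z
  rw [norm_sq_coord] at h
  simp only [Fin.sum_univ_three, dF]
  have e : ∀ a : ℝ, a = 1 → -2 * rho 1 z ^ 3 = -2 * rho 1 z ^ 3 * a := by
    intro a h; rw [h, mul_one]
  rw [e _ h]
  ring

lemma sum_pd_aE {ε : ℝ} (hε : 0 < ε) (i : Fin 3) (z : E3) :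
    ∑ j, pd j (aE ε i j) z = bE ε i z := by
  have h := rho_sq hε z
  rw [norm_sq_coord] at h
  have h3 : rho ε z ^ 3 = rho ε z ^ 3 * ((ε + (z 0 ^ 2 + z 1 ^ 2 + z 2 ^ 2)) * rho ε z ^ 2) := by
    rw [h, mul_one]
  simp only [pd_aE hε, bE, Fin.sum_univ_three]
  fin_cases i <;> simp
  · linear_combination (-3) * z 0 * h3
  · linear_combination (-3) * z 1 * h3
  · linear_combination (-3) * z 2 * h3

/-! ### Bounds on the kernels -/

lemma rho_le_inv {ε : ℝ} (hε : 0 < ε) (z : E3) (hz : z ≠ 0) : rho ε z ≤ ‖z‖⁻¹ := by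
  have : 0 < ‖z‖ := norm_pos_iff.2 hz
  rw [le_inv_comm₀ (rho_pos hε z) this, rho, inv_inv]
  apply Real.le_sqrt_of_sq_le
  linarith

/-- `|z_i z_j ρ²| ≤ 1`, so `a^ε` is bounded by `2ρ`. -/
lemma abs_aE_le {ε : ℝ} (hε : 0 < ε) (i j : Fin 3) (z : E3) : |aE ε i j z| ≤ 2 * rho ε z := by
  have e : aE ε i j z = rho ε z * ((if i = j then 1 else 0) - (z i * rho ε z) * (z j * rho ε z)) := by
    unfold aE; ring
  rw [e, abs_mul, abs_of_nonneg (rho_nonneg ε z), mul_comm]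
  gcongr
  · exact rho_nonneg ε z
  have h1 := coord_mul_rho_le hε z i
  have h2 := coord_mul_rho_le hε z j
  have h3 : |(z i * rho ε z) * (z j * rho ε z)| ≤ 1 := by
    rw [abs_mul]
    exact mul_le_one₀ h1 (abs_nonneg _) h2
  rw [abs_le] at h3 ⊢
  split_ifs <;> constructor <;> linarith

lemma abs_pd_aE_le {ε : ℝ} (hε : 0 < ε) (i j l : Fin 3) (z : E3) :
    |pd l (aE ε i j) z| ≤ 6 * rho ε z ^ 2 := by
  set r := rho ε z
  have e : pd l (aE ε i j) z = r ^ 2 * (-(if i = j then 1 else 0) * (z l * r)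
      - (if i = l then 1 else 0) * (z j * r) - (if j = l then 1 else 0) * (z i * r)
      + 3 * ((z i * r) * (z j * r) * (z l * r))) := by
    rw [pd_aE hε]; ring
  have h1 := coord_mul_rho_le hε z i
  have h2 := coord_mul_rho_le hε z j
  have h3 := coord_mul_rho_le hε z l
  have h4 : |(z i * r) * (z j * r) * (z l * r)| ≤ 1 := by
    rw [abs_mul, abs_mul]
    exact mul_le_one₀ (mul_le_one₀ h1 (abs_nonneg _) h2) (abs_nonneg _) h3
  rw [e, abs_mul, abs_of_nonneg (sq_nonneg r), mul_comm]
  gcongr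
  rw [abs_le] at h1 h2 h3 h4 ⊢
  split_ifs <;> constructor <;> linarith

lemma abs_bE_le {ε : ℝ} (hε : 0 < ε) (i : Fin 3) (z : E3) : |bE ε i z| ≤ 5 * rho ε z ^ 2 := by
  set r := rho ε z
  have e : bE ε i z = r ^ 2 * (-2 * (z i * r) - 3 * ((ε * r ^ 2) * (z i * r))) := by
    unfold bE; ring
  have h1 := coord_mul_rho_le hε z i
  have h2 : |(ε * r ^ 2) * (z i * r)| ≤ 1 := by
    rw [abs_mul]
    refine mul_le_one₀ ?_ (abs_nonneg _) h1
    rw [abs_of_nonneg (by positivity)]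
    exact eps_mul_rho_sq_le hε z
  rw [e, abs_mul, abs_of_nonneg (sq_nonneg r), mul_comm]
  gcongr
  rw [abs_le] at h1 h2 ⊢
  constructor <;> linarith

lemma rho_one_le (z : E3) : rho 1 z ≤ 1 := by simpa using rho_le_eps one_pos z

lemma abs_bF_le (i : Fin 3) (z : E3) : |bF i z| ≤ 2 * rho 1 z ^ 2 := by
  set r := rho 1 z
  have e : bF i z = r ^ 2 * (-2 * (z i * r)) := by
    unfold bF; ring
  have h1 := coord_mul_rho_le one_pos z i
  rw [e, abs_mul, abs_of_nonneg (sq_nonneg r), mul_comm]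
  gcongr
  rw [abs_le] at h1 ⊢
  constructor <;> linarith

lemma abs_dF_le (i : Fin 3) (z : E3) : |dF i z| ≤ 8 * rho 1 z ^ 3 := by
  set r := rho 1 z
  have hr : 0 ≤ r := rho_nonneg 1 z
  have e : dF i z = r ^ 3 * (-2 + 6 * ((z i * r) * (z i * r))) := by
    unfold dF; ring
  have h1 := coord_mul_rho_le one_pos z i
  have h2 : |(z i * r) * (z i * r)| ≤ 1 := by
    rw [abs_mul]
    exact mul_le_one₀ h1 (abs_nonneg _) h1
  rw [e, abs_mul, abs_of_nonneg (pow_nonneg hr 3), mul_comm]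
  gcongr
  rw [abs_le] at h2 ⊢
  constructor <;> linarith

lemma abs_aK_le (i j : Fin 3) (z : E3) : |aK z i j| ≤ 2 * ‖z‖⁻¹ := by
  simp only [aK, Pi3, Matrix.of_apply]
  rw [abs_mul, abs_of_nonneg (by positivity), mul_comm]
  gcongr
  have h3 : |z i * z j / ‖z‖ ^ 2| ≤ 1 := by
    rw [abs_div, abs_mul, abs_of_nonneg (sq_nonneg ‖z‖), sq]
    apply div_le_one_of_le₀ _ (by positivity)
    exact mul_le_mul (abs_coord_le z i) (abs_coord_le z j) (abs_nonneg _) (norm_nonneg _)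
  rw [abs_le] at h3 ⊢
  split_ifs <;> constructor <;> linarith

lemma measurable_aK (i j : Fin 3) : Measurable (fun z : E3 => aK z i j) := by
  simp only [aK, Pi3, Matrix.of_apply]
  fun_prop

lemma tendsto_aE (i j : Fin 3) (z : E3) (hz : z ≠ 0) :
    Filter.Tendsto (fun ε => aE ε i j z) (nhdsWithin 0 (Set.Ioi 0)) (nhds (aK z i j)) := by
  have hz' : 0 < ‖z‖ := norm_pos_iff.2 hz
  have e : aK z i j = aE 0 i j z := by
    simp only [aK, Pi3, Matrix.of_apply, aE, rho, zero_add, Real.sqrt_sq hz'.le]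
    field_simp
  rw [e]
  have hc : ContinuousAt (fun ε => rho ε z) 0 := by
    unfold rho
    apply ContinuousAt.inv₀ (by fun_prop)
    simpa using hz
  have : ContinuousAt (fun ε => aE ε i j z) 0 := by
    unfold aE
    fun_prop
  exact this.tendsto.mono_left nhdsWithin_le_nhds

/-! ### Convolution of a weakly singular kernel with a Schwartz function -/

/-- The singularity `|z|^{-n}` cut off outside the unit ball. -/
noncomputable def sing (n : ℕ) (z : E3) : ℝ := if ‖z‖ < 1 then (‖z‖⁻¹) ^ n else 0

lemma sing_nonneg (n : ℕ) (z : E3) : 0 ≤ sing n z := by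
  unfold sing
  split_ifs <;> positivity

lemma measurable_sing (n : ℕ) : Measurable (sing n) := by
  unfold sing
  exact Measurable.ite (measurableSet_lt measurable_norm measurable_const) (by fun_prop)
    measurable_const

lemma integrable_sing {n : ℕ} (hn : n ≤ 2) : Integrable (sing n) := by
  have h : IntegrableOn (sing n) (Metric.ball 0 1) := by
    refine integrableOn_ball_of_norm_le_rpow (C := 1) (α := n) (by simp) ?_ ?_
      (measurable_sing n).aestronglyMeasurable
    · simp
      exact_mod_cast Nat.lt_succ_of_le hn
    · refine Filter.Eventually.of_forall fun z => ?_
      rw [Real.norm_of_nonneg (sing_nonneg n z), Real.rpow_neg (norm_nonneg z), Real.rpow_natCast,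
        one_mul]
      unfold sing
      split_ifs
      · rw [inv_pow]
      · positivity
  refine (integrableOn_iff_integrable_of_support_subset ?_).1 h
  intro z hz
  rw [Function.mem_support] at hz
  unfold sing at hz
  rw [mem_ball_zero_iff]
  by_contra hc
  simp [hc] at hz

lemma norm_inv_le_sing (z : E3) : ‖z‖⁻¹ ≤ 1 + sing 1 z := by
  unfold sing
  split_ifs with h
  · simp
  · simp only [add_zero]
    exact inv_le_one_of_one_le₀ (not_lt.1 h)

lemma schwartz_decay {F : Type*} [NormedAddCommGroup F] [NormedSpace ℝ F] (φ : 𝓢(E3, F)) :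
    ∃ C, 0 ≤ C ∧ ∀ x, ‖φ x‖ ≤ C * (1 + ‖x‖) ^ (-4 : ℝ) := by
  refine ⟨2 ^ 4 * ((Finset.Iic (4, 0)).sup fun m => SchwartzMap.seminorm ℝ m.1 m.2) φ,
    by positivity, fun x => ?_⟩
  · have h := φ.one_add_le_sup_seminorm_apply (𝕜 := ℝ) (m := (4, 0)) (k := 4) (n := 0) le_rfl le_rfl x
    rw [norm_iteratedFDeriv_zero] at h
    rw [show (-4 : ℝ) = -((4 : ℕ) : ℝ) by norm_num, Real.rpow_neg (by positivity),
      Real.rpow_natCast, ← div_eq_mul_inv, le_div_iff₀ (by positivity), mul_comm]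
    exact h

/-- Convolution `∫ a(w - v) φ(v) dv`. -/
noncomputable def conv (a : E3 → ℝ) (φ : E3 → ℝ) (w : E3) : ℝ := ∫ v, a (w - v) * φ v

lemma ae_ne_sub (w : E3) : ∀ᵐ v : E3, w - v ≠ 0 := by
  have h : ∀ᵐ v : E3, v ≠ w := by
    simp [ae_iff]
  filter_upwards [h] with v hv
  exact sub_ne_zero.2 hv.symm

lemma integrable_sing_sub {n : ℕ} (hn : n ≤ 2) (w : E3) : Integrable (fun v => sing n (w - v)) :=
  (integrable_sing hn).comp_sub_left w

lemma inv_norm_conv (φ : 𝓢(E3, ℝ)) : ∃ M, 0 ≤ M ∧ ∀ w : E3,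
    Integrable (fun v => ‖w - v‖⁻¹ * |φ v|) ∧ ∫ v, ‖w - v‖⁻¹ * |φ v| ≤ M := by
  obtain ⟨C, hC, hφ⟩ : ∃ C, 0 ≤ C ∧ ∀ x, |φ x| ≤ C :=
    ⟨SchwartzMap.seminorm ℝ 0 0 φ, apply_nonneg _ _, fun x => φ.norm_le_seminorm ℝ x⟩
  have hi1 : Integrable (fun v => |φ v|) := φ.integrable.norm
  have hp : ∀ w v : E3, ‖w - v‖⁻¹ * |φ v| ≤ |φ v| + C * sing 1 (w - v) := by
    intro w v
    have h1 := norm_inv_le_sing (w - v)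
    have h2 := sing_nonneg 1 (w - v)
    have h3 := hφ v
    have h4 := abs_nonneg (φ v)
    nlinarith [mul_le_mul_of_nonneg_right h1 h4, mul_le_mul_of_nonneg_right h3 h2]
  refine ⟨(∫ v, |φ v|) + C * ∫ v, sing 1 v, ?_, fun w => ?_⟩
  · have h1 : 0 ≤ ∫ v, sing 1 v := integral_nonneg fun v => sing_nonneg 1 v
    have h2 : 0 ≤ ∫ v, |φ v| := integral_nonneg fun v => abs_nonneg (φ v)
    positivity
  have hi2 : Integrable (fun v => C * sing 1 (w - v)) :=
    (integrable_sing_sub (by norm_num) w).const_mul C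
  have hi : Integrable (fun v => ‖w - v‖⁻¹ * |φ v|) := by
    refine (hi1.add hi2).mono' ?_ (Filter.Eventually.of_forall fun v => ?_)
    · have := φ.continuous.measurable
      exact (by fun_prop : Measurable (fun v => ‖w - v‖⁻¹ * |φ v|)).aestronglyMeasurable
    · rw [Real.norm_of_nonneg (by positivity)]
      exact hp w v
  refine ⟨hi, (integral_mono hi (hi1.add hi2) (hp w)).trans (le_of_eq ?_)⟩
  simp only [Pi.add_apply]
  rw [integral_add hi1 hi2, integral_const_mul, integral_sub_left_eq_self (sing 1) volume w]

section Conv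

variable {a : E3 → ℝ} {C : ℝ}

lemma conv_integrable (ha : Measurable a) (hC : ∀ z, z ≠ 0 → |a z| ≤ C * ‖z‖⁻¹)
    (φ : 𝓢(E3, ℝ)) (w : E3) : Integrable (fun v => a (w - v) * φ v) := by
  obtain ⟨M, -, hM⟩ := inv_norm_conv φ
  refine ((hM w).1.const_mul C).mono' ?_ ?_
  · have := φ.continuous.measurable
    exact (by fun_prop : Measurable (fun v => a (w - v) * φ v)).aestronglyMeasurable
  · filter_upwards [ae_ne_sub w] with v hv
    rw [norm_mul, Real.norm_eq_abs, Real.norm_eq_abs, ← mul_assoc]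
    gcongr
    exact hC _ hv

/-- The bound depends on the kernel only through the constant `C`. -/
lemma conv_bound (C : ℝ) (hC0 : 0 ≤ C) (φ : 𝓢(E3, ℝ)) : ∃ M, 0 ≤ M ∧ ∀ a : E3 → ℝ, Measurable a →
    (∀ z, z ≠ 0 → |a z| ≤ C * ‖z‖⁻¹) → ∀ w, |conv a φ w| ≤ M := by
  obtain ⟨M, hM0, hM⟩ := inv_norm_conv φ
  refine ⟨C * M, by positivity, fun a ha hC w => ?_⟩
  unfold conv
  calc |∫ v, a (w - v) * φ v| ≤ ∫ v, C * (‖w - v‖⁻¹ * |φ v|) := by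
        rw [← Real.norm_eq_abs]
        refine norm_integral_le_of_norm_le ((hM w).1.const_mul C) ?_
        filter_upwards [ae_ne_sub w] with v hv
        rw [norm_mul, Real.norm_eq_abs, Real.norm_eq_abs, ← mul_assoc]
        gcongr
        exact hC _ hv
    _ ≤ C * M := by
        rw [integral_const_mul]
        exact mul_le_mul_of_nonneg_left (hM w).2 hC0

lemma integrable_inv_mul_decay :
    Integrable (fun z : E3 => ‖z‖⁻¹ * (1 + ‖z‖) ^ (-4 : ℝ)) := by
  have h1 : Integrable (fun z : E3 => (1 + ‖z‖) ^ (-4 : ℝ)) :=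
    integrable_one_add_norm (by simp; norm_num)
  have h2 := integrable_sing (n := 1) (by norm_num)
  refine (h1.add h2).mono' ?_ (Filter.Eventually.of_forall fun z => ?_)
  · exact (by fun_prop : Measurable (fun z : E3 => ‖z‖⁻¹ * (1 + ‖z‖) ^ (-4 : ℝ))).aestronglyMeasurable
  · rw [Real.norm_of_nonneg (by positivity)]
    have h3 : (1 + ‖z‖) ^ (-4 : ℝ) ≤ 1 :=
      Real.rpow_le_one_of_one_le_of_nonpos (by simp) (by norm_num)
    have h4 : 0 ≤ (1 + ‖z‖) ^ (-4 : ℝ) := by positivity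
    have h5 := norm_inv_le_sing z
    have h6 := sing_nonneg 1 z
    simp only [Pi.add_apply]
    nlinarith [mul_le_mul_of_nonneg_right h5 h4, mul_le_mul_of_nonneg_left h3 h6]

lemma conv_eq (φ : E3 → ℝ) (w : E3) : conv a φ w = ∫ z, a z * φ (w - z) := by
  unfold conv
  rw [← integral_sub_left_eq_self (fun z => a z * φ (w - z)) volume w]
  simp

lemma conv_hasFDerivAt (ha : Measurable a) (hC0 : 0 ≤ C) (hC : ∀ z, z ≠ 0 → |a z| ≤ C * ‖z‖⁻¹)
    (φ : 𝓢(E3, ℝ)) (w : E3) :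
    HasFDerivAt (conv a φ) (∫ z, a z • fderiv ℝ φ (w - z)) w ∧
      Integrable (fun z => a z • fderiv ℝ φ (w - z)) := by
  obtain ⟨D, hD0, hD⟩ := schwartz_decay (SchwartzMap.fderivCLM ℝ E3 ℝ φ)
  simp only [SchwartzMap.fderivCLM_apply] at hD
  have hcont : Continuous (fderiv ℝ φ) := (φ.smooth 1).continuous_fderiv (by simp)
  set B : E3 → ℝ := fun z => C * D * (2 + ‖w‖) ^ (4 : ℝ) * (‖z‖⁻¹ * (1 + ‖z‖) ^ (-4 : ℝ)) with hB
  have hBi : Integrable B := integrable_inv_mul_decay.const_mul _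
  have hz0 : ∀ᵐ z : E3, z ≠ 0 := by simp [ae_iff]
  have hbound : ∀ᵐ z : E3, ∀ x ∈ Metric.ball w 1, ‖a z • fderiv ℝ φ (x - z)‖ ≤ B z := by
    filter_upwards [hz0] with z hz x hx
    rw [norm_smul, Real.norm_eq_abs]
    have h1 : ‖x‖ ≤ ‖w‖ + 1 := by
      have h1 := norm_sub_norm_le x w
      rw [Metric.mem_ball, dist_eq_norm] at hx
      linarith
    have h2 : 1 + ‖z‖ ≤ (2 + ‖w‖) * (1 + ‖x - z‖) := by
      have h3 : ‖z‖ ≤ ‖x‖ + ‖x - z‖ := by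
        have := norm_sub_le x (x - z)
        simpa using this
      nlinarith [norm_nonneg w, norm_nonneg (x - z)]
    have h4 : (1 + ‖x - z‖) ^ (-4 : ℝ) ≤ (2 + ‖w‖) ^ (4 : ℝ) * (1 + ‖z‖) ^ (-4 : ℝ) := by
      rw [Real.rpow_neg (by positivity), Real.rpow_neg (by positivity), ← div_eq_mul_inv,
        inv_le_iff_one_le_mul₀ (by positivity), div_mul_eq_mul_div, one_le_div₀ (by positivity),
        ← Real.mul_rpow (by positivity) (by positivity)]
      exact Real.rpow_le_rpow (by positivity) h2 (by norm_num)
    calc |a z| * ‖fderiv ℝ φ (x - z)‖ ≤ (C * ‖z‖⁻¹) * (D * ((2 + ‖w‖) ^ (4 : ℝ) * (1 + ‖z‖) ^ (-4 : ℝ))) := by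
          gcongr
          · exact hC z hz
          · exact (hD _).trans (by gcongr)
      _ = B z := by rw [hB]; ring
  have hm : ∀ x : E3, AEStronglyMeasurable (fun z => a z * φ (x - z)) := by
    intro x
    have := φ.continuous.measurable
    exact (by fun_prop : Measurable (fun z => a z * φ (x - z))).aestronglyMeasurable
  have hm' : AEStronglyMeasurable (fun z => a z • fderiv ℝ φ (w - z)) :=
    ha.aestronglyMeasurable.smul (by fun_prop : Continuous (fun z => fderiv ℝ φ (w - z))).aestronglyMeasurable
  have hint : Integrable (fun z => a z * φ (w - z)) := by
    have := (conv_integrable ha hC φ w).comp_sub_left w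
    simpa using this
  have key := hasFDerivAt_integral_of_dominated_of_fderiv_le (μ := volume) (𝕜 := ℝ)
    (F := fun x z => a z * φ (x - z)) (F' := fun x z => a z • fderiv ℝ φ (x - z)) (bound := B)
    (Metric.ball_mem_nhds w one_pos)
    (Filter.Eventually.of_forall hm) hint hm' hbound hBi
    (Filter.Eventually.of_forall fun z x _ => by
      have h1 : HasFDerivAt (fun x => φ (x - z)) (fderiv ℝ φ (x - z)) x := by
        have := (φ.hasFDerivAt (x - z)).comp x ((hasFDerivAt_id x).sub_const z)
        rw [ContinuousLinearMap.comp_id] at this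
        exact this
      exact h1.const_mul (a z))
  refine ⟨?_, hBi.mono' hm' ?_⟩
  · have e : conv a φ = fun x => ∫ z, a z * φ (x - z) := funext fun x => conv_eq (a := a) φ x
    rw [e]
    exact key
  · filter_upwards [hbound] with z hz
    exact hz w (Metric.mem_ball_self one_pos)

lemma conv_differentiable (ha : Measurable a) (hC0 : 0 ≤ C)
    (hC : ∀ z, z ≠ 0 → |a z| ≤ C * ‖z‖⁻¹) (φ : 𝓢(E3, ℝ)) : Differentiable ℝ (conv a φ) :=
  fun w => (conv_hasFDerivAt ha hC0 hC φ w).1.differentiableAt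

lemma pd_conv (ha : Measurable a) (hC0 : 0 ≤ C) (hC : ∀ z, z ≠ 0 → |a z| ≤ C * ‖z‖⁻¹)
    (φ : 𝓢(E3, ℝ)) (i : Fin 3) (w : E3) : pd i (conv a φ) w = conv a (pdS i φ) w := by
  have h := conv_hasFDerivAt ha hC0 hC φ w
  rw [pd, h.1.fderiv, ContinuousLinearMap.integral_apply h.2, conv_eq, pdS_coe]
  rfl


end Conv

/-! ### Weak form of the collision operator -/

/-- Differentiable functions that are bounded together with their `i`-th partial derivative. -/
def BddD (i : Fin 3) (K : E3 → ℝ) : Prop :=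
  Differentiable ℝ K ∧ ∃ M, ∀ x, |K x| ≤ M ∧ |pd i K x| ≤ M

lemma measurable_pd (i : Fin 3) (K : E3 → ℝ) : Measurable (pd i K) :=
  measurable_fderiv_apply_const ℝ K _

lemma schwartz_bdd (φ : 𝓢(E3, ℝ)) : ∃ C, 0 ≤ C ∧ ∀ x, |φ x| ≤ C :=
  ⟨SchwartzMap.seminorm ℝ 0 0 φ, apply_nonneg _ _, fun x => φ.norm_le_seminorm ℝ x⟩

lemma BddD.schwartz (i : Fin 3) (φ : 𝓢(E3, ℝ)) : BddD i φ := by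
  obtain ⟨C, -, hC⟩ := schwartz_bdd φ
  obtain ⟨D, -, hD⟩ := schwartz_bdd (pdS i φ)
  rw [pdS_coe] at hD
  exact ⟨φ.differentiable, max C D, fun x => ⟨(hC x).trans (le_max_left _ _),
    (hD x).trans (le_max_right _ _)⟩⟩

lemma BddD.mul {i : Fin 3} {K L : E3 → ℝ} (hK : BddD i K) (hL : BddD i L) :
    BddD i (fun x => K x * L x) := by
  obtain ⟨dK, M, hM⟩ := hK
  obtain ⟨dL, N, hN⟩ := hL
  refine ⟨dK.mul dL, 2 * M * N, fun x => ?_⟩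
  have m0 : 0 ≤ M := (abs_nonneg _).trans (hM x).1
  have n0 : 0 ≤ N := (abs_nonneg _).trans (hN x).1
  rw [pd_mul i (dK x) (dL x)]
  have h1 : |K x * L x| ≤ M * N := by
    rw [abs_mul]; exact mul_le_mul (hM x).1 (hN x).1 (abs_nonneg _) m0
  have h2 : |K x * pd i L x| ≤ M * N := by
    rw [abs_mul]; exact mul_le_mul (hM x).1 (hN x).2 (abs_nonneg _) m0
  have h3 : |pd i K x * L x| ≤ M * N := by
    rw [abs_mul]; exact mul_le_mul (hM x).2 (hN x).1 (abs_nonneg _) m0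
  have := mul_nonneg m0 n0
  exact ⟨by linarith, by linarith [abs_add_le (K x * pd i L x) (pd i K x * L x)]⟩

lemma BddD.sub {i : Fin 3} {K L : E3 → ℝ} (hK : BddD i K) (hL : BddD i L) :
    BddD i (fun x => K x - L x) := by
  obtain ⟨dK, M, hM⟩ := hK
  obtain ⟨dL, N, hN⟩ := hL
  refine ⟨dK.sub dL, M + N, fun x => ?_⟩
  rw [pd_sub i (dK x) (dL x)]
  exact ⟨(abs_sub _ _).trans (add_le_add (hM x).1 (hN x).1),
    (abs_sub _ _).trans (add_le_add (hM x).2 (hN x).2)⟩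

lemma BddD.add {i : Fin 3} {K L : E3 → ℝ} (hK : BddD i K) (hL : BddD i L) :
    BddD i (fun x => K x + L x) := by
  obtain ⟨dK, M, hM⟩ := hK
  obtain ⟨dL, N, hN⟩ := hL
  refine ⟨dK.add dL, M + N, fun x => ?_⟩
  have e : pd i (fun x => K x + L x) x = pd i K x + pd i L x := by
    unfold pd
    rw [fderiv_fun_add (dK x) (dL x)]
    rfl
  rw [e]
  exact ⟨(abs_add_le _ _).trans (add_le_add (hM x).1 (hN x).1),
    (abs_add_le _ _).trans (add_le_add (hM x).2 (hN x).2)⟩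

lemma BddD.ibp {i : Fin 3} {K : E3 → ℝ} (hK : BddD i K) (φ : 𝓢(E3, ℝ)) :
    Integrable (fun x => K x * pd i φ x) ∧ Integrable (fun x => pd i K x * φ x) ∧
    ∫ x, K x * pd i φ x = - ∫ x, pd i K x * φ x := by
  obtain ⟨dK, M, hM⟩ := hK
  have mK : AEStronglyMeasurable K := dK.continuous.aestronglyMeasurable
  have i1 : Integrable (fun x => K x * pd i φ x) := by
    have := (pdS i φ).integrable (μ := volume)
    rw [pdS_coe] at this
    exact this.bdd_mul mK (Filter.Eventually.of_forall fun x => (hM x).1)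
  have i2 : Integrable (fun x => pd i K x * φ x) :=
    (φ.integrable (μ := volume)).bdd_mul (measurable_pd i K).aestronglyMeasurable
      (Filter.Eventually.of_forall fun x => (hM x).2)
  have i3 : Integrable (fun x => K x * φ x) :=
    (φ.integrable (μ := volume)).bdd_mul mK (Filter.Eventually.of_forall fun x => (hM x).1)
  exact ⟨i1, i2, integral_mul_fderiv_eq_neg_fderiv_mul_of_integrable i2 i1 i3
    (fun x _ => dK x) (fun x _ => φ.differentiableAt)⟩

/-- Kernels dominated by `C |z|⁻¹`. -/
def Ker (C : ℝ) (a : E3 → ℝ) : Prop := Measurable a ∧ ∀ z, z ≠ 0 → |a z| ≤ C * ‖z‖⁻¹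

lemma ker_aK (i j : Fin 3) : Ker 2 (fun z => aK z i j) :=
  ⟨measurable_aK i j, fun z _ => abs_aK_le i j z⟩

lemma ker_aE {ε : ℝ} (hε : 0 < ε) (i j : Fin 3) : Ker 2 (aE ε i j) :=
  ⟨(differentiable_aE hε i j).continuous.measurable, fun z hz =>
    (abs_aE_le hε i j z).trans (by have := rho_le_inv hε z hz; linarith)⟩

lemma Ker.bddD {C : ℝ} (hC : 0 ≤ C) {a : E3 → ℝ} (ha : Ker C a) (i : Fin 3) (φ : 𝓢(E3, ℝ)) :
    BddD i (conv a φ) := by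
  obtain ⟨M, -, hM⟩ := conv_bound C hC φ
  obtain ⟨N, -, hN⟩ := conv_bound C hC (pdS i φ)
  refine ⟨conv_differentiable ha.1 hC ha.2 φ, max M N, fun x => ⟨?_, ?_⟩⟩
  · exact (hM a ha.1 ha.2 x).trans (le_max_left _ _)
  · rw [pd_conv ha.1 hC ha.2]
    exact (hN a ha.1 ha.2 x).trans (le_max_right _ _)

/-- The flux `∑_j ((A_ij * g) ∂_j f - (A_ij * ∂_j g) f)` for a matrix kernel `A`. -/
noncomputable def flux (A : Fin 3 → Fin 3 → E3 → ℝ) (g f : 𝓢(E3, ℝ)) (i : Fin 3) (w : E3) : ℝ :=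
  ∑ j, (conv (A i j) g w * pd j f w - conv (A i j) (pdS j g) w * f w)

/-- The weak form `-∑_i ∫ (flux)_i ∂_i H` for a matrix kernel `A`. -/
noncomputable def weakT (A : Fin 3 → Fin 3 → E3 → ℝ) (g f H : 𝓢(E3, ℝ)) : ℝ :=
  - ∑ i, ∫ w, flux A g f i w * pd i H w

lemma flux_bddD {A : Fin 3 → Fin 3 → E3 → ℝ} (hA : ∀ i j, Ker 2 (A i j)) (g f : 𝓢(E3, ℝ))
    (i : Fin 3) : BddD i (flux A g f i) := by
  have h : ∀ j, BddD i (fun w => conv (A i j) g w * pd j f w - conv (A i j) (pdS j g) w * f w) := by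
    intro j
    refine BddD.sub (((hA i j).bddD two_pos.le i g).mul ?_)
      (((hA i j).bddD two_pos.le i (pdS j g)).mul (BddD.schwartz i f))
    rw [← pdS_coe]
    exact BddD.schwartz i _
  unfold flux
  simp only [Fin.sum_univ_three]
  exact ((h 0).add (h 1)).add (h 2)

lemma landau_eq_flux (g f : 𝓢(E3, ℝ)) (i : Fin 3) (w : E3) :
    ∫ vs : E3, ∑ j : Fin 3, aK (w - vs) i j * (g vs * pd j f w - pd j g vs * f w)
      = flux (fun i j z => aK z i j) g f i w := by
  unfold flux
  have h : ∀ j, ∀ φ : 𝓢(E3, ℝ), Integrable (fun v => aK (w - v) i j * φ v) := fun j φ =>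
    conv_integrable (a := fun z => aK z i j) (ker_aK i j).1 (ker_aK i j).2 φ w
  have e : ∀ j, (fun vs => aK (w - vs) i j * (g vs * pd j f w - pd j g vs * f w)) =
      fun vs => (aK (w - vs) i j * g vs) * pd j f w - (aK (w - vs) i j * pdS j g vs) * f w := by
    intro j
    funext vs
    rw [pdS_coe]
    ring
  have hj : ∀ j, Integrable fun vs => aK (w - vs) i j * (g vs * pd j f w - pd j g vs * f w) := by
    intro j
    rw [e]
    exact ((h j g).mul_const _).sub ((h j _).mul_const _)
  rw [integral_finsetSum _ fun j _ => hj j]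
  refine Finset.sum_congr rfl fun j _ => ?_
  rw [e, integral_sub ((h j g).mul_const _) ((h j _).mul_const _), integral_mul_const,
    integral_mul_const]
  rfl

/-- Integration by parts moves the divergence in `Q(g,f)` onto the test function. -/
lemma pairL_eq_weakT (g f H : 𝓢(E3, ℝ)) :
    pairL (landauQ g f) H = weakT (fun i j z => aK z i j) g f H := by
  have e : landauQ g f = fun v => ∑ i, pd i (flux (fun i j z => aK z i j) g f i) v := by
    funext v
    unfold landauQ
    refine Finset.sum_congr rfl fun i _ => ?_
    rw [funext fun w => landau_eq_flux g f i w]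
    rfl
  have hb := fun i => (flux_bddD ker_aK g f i).ibp H
  unfold pairL weakT
  rw [e]
  simp only [Finset.sum_mul]
  rw [integral_finsetSum _ fun i _ => (hb i).2.1, ← Finset.sum_neg_distrib]
  refine Finset.sum_congr rfl fun i _ => ?_
  rw [(hb i).2.2, neg_neg]

open Filter in
lemma tendsto_conv (i j : Fin 3) (φ : 𝓢(E3, ℝ)) (w : E3) :
    Tendsto (fun ε => conv (aE ε i j) φ w) (nhdsWithin 0 (Set.Ioi 0))
      (nhds (conv (fun z => aK z i j) φ w)) := by
  obtain ⟨M, -, hM⟩ := inv_norm_conv φ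
  have hpos : ∀ᶠ ε : ℝ in nhdsWithin 0 (Set.Ioi 0), 0 < ε := self_mem_nhdsWithin
  unfold conv
  refine tendsto_integral_filter_of_dominated_convergence
    (fun v => 2 * (‖w - v‖⁻¹ * |φ v|)) ?_ ?_ ((hM w).1.const_mul 2) ?_
  · filter_upwards [hpos] with ε hε
    exact (conv_integrable (ker_aE hε i j).1 (ker_aE hε i j).2 φ w).1
  · filter_upwards [hpos] with ε hε
    filter_upwards [ae_ne_sub w] with v hv
    rw [norm_mul, Real.norm_eq_abs, Real.norm_eq_abs, ← mul_assoc]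
    gcongr
    exact (ker_aE hε i j).2 _ hv
  · filter_upwards [ae_ne_sub w] with v hv
    exact (tendsto_aE i j _ hv).mul_const _

open Filter in
/-- The weak form is the limit of the weak forms of the regularized kernels. -/
lemma tendsto_weakT (g f H : 𝓢(E3, ℝ)) :
    Tendsto (fun ε => weakT (aE ε) g f H) (nhdsWithin 0 (Set.Ioi 0))
      (nhds (weakT (fun i j z => aK z i j) g f H)) := by
  have hpos : ∀ᶠ ε : ℝ in nhdsWithin 0 (Set.Ioi 0), 0 < ε := self_mem_nhdsWithin
  unfold weakT
  refine (tendsto_finsetSum _ fun i _ => ?_).neg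
  obtain ⟨M, M0, hM⟩ := conv_bound 2 two_pos.le g
  choose N N0 hN using fun j => conv_bound 2 two_pos.le (pdS j g)
  obtain ⟨F, F0, hF⟩ := schwartz_bdd f
  choose D D0 hD using fun j => schwartz_bdd (pdS j f)
  refine tendsto_integral_filter_of_dominated_convergence
    (fun w => (∑ j, (M * D j + N j * F)) * |pd i H w|) ?_ ?_ ?_ ?_
  · filter_upwards [hpos] with ε hε
    exact ((flux_bddD (ker_aE hε) g f i).ibp H).1.1
  · filter_upwards [hpos] with ε hε
    refine Eventually.of_forall fun w => ?_
    rw [norm_mul, Real.norm_eq_abs, Real.norm_eq_abs]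
    gcongr
    unfold flux
    refine (Finset.abs_sum_le_sum_abs _ _).trans (Finset.sum_le_sum fun j _ => ?_)
    refine (abs_sub _ _).trans ?_
    rw [abs_mul, abs_mul]
    have hk := ker_aE hε i j
    have h1 := hM _ hk.1 hk.2 w
    have h2 := hN j _ hk.1 hk.2 w
    have h3 := hF w
    have h4 := hD j w
    rw [pdS_coe j f] at h4
    have := N0 j
    gcongr
  · have := (pdS i H).integrable (μ := volume)
    rw [pdS_coe] at this
    exact this.norm.const_mul _
  · refine Eventually.of_forall fun w => ?_
    refine Tendsto.mul_const _ ?_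
    unfold flux
    exact tendsto_finsetSum _ fun j _ =>
      ((tendsto_conv i j g w).mul_const _).sub ((tendsto_conv i j (pdS j g) w).mul_const _)

/-! ### The weak form as a double integral -/

/-- The trilinear form `∬ K(v - w) ψ(v) g(w) dv dw`. -/
noncomputable def tri (K : E3 → ℝ) (ψ g : E3 → ℝ) : ℝ :=
  ∫ p : E3 × E3, K (p.1 - p.2) * ψ p.1 * g p.2

/-- Bounded measurable functions. -/
def BddM (K : E3 → ℝ) : Prop := Measurable K ∧ ∃ M, ∀ x, |K x| ≤ M

lemma BddM.integrable {K : E3 → ℝ} (hK : BddM K) (ψ g : 𝓢(E3, ℝ)) :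
    Integrable (fun p : E3 × E3 => K (p.1 - p.2) * ψ p.1 * g p.2) := by
  obtain ⟨mK, M, hM⟩ := hK
  have h := (ψ.integrable (μ := volume)).mul_prod (g.integrable (μ := volume))
  have h2 := h.bdd_mul (f := fun p : E3 × E3 => K (p.1 - p.2)) (c := M)
    (by fun_prop : Measurable (fun p : E3 × E3 => K (p.1 - p.2))).aestronglyMeasurable
    (Filter.Eventually.of_forall fun p => hM _)
  simp only [mul_assoc]
  exact h2

lemma tri_eq_conv {K : E3 → ℝ} (hK : BddM K) (ψ g : 𝓢(E3, ℝ)) :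
    ∫ v, conv K g v * ψ v = tri K ψ g := by
  unfold tri
  rw [Measure.volume_eq_prod, integral_prod _ (hK.integrable ψ g)]
  refine integral_congr_ae (Filter.Eventually.of_forall fun v => ?_)
  simp only [conv]
  rw [← integral_mul_const]
  refine integral_congr_ae (Filter.Eventually.of_forall fun w => ?_)
  simp only
  ring

lemma integrable_conv_mul {K : E3 → ℝ} (hK : BddM K) (ψ g : 𝓢(E3, ℝ)) :
    Integrable (fun v => conv K g v * ψ v) := by
  refine (hK.integrable ψ g).integral_prod_left.congr (Filter.Eventually.of_forall fun v => ?_)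
  simp only [conv]
  rw [← integral_mul_const]
  refine integral_congr_ae (Filter.Eventually.of_forall fun w => ?_)
  simp only
  ring

lemma BddD.bddM {i : Fin 3} {K : E3 → ℝ} (hK : BddD i K) : BddM K :=
  ⟨hK.1.continuous.measurable, hK.2.imp fun _ h x => (h x).1⟩

lemma BddD.bddM_pd {i : Fin 3} {K : E3 → ℝ} (hK : BddD i K) : BddM (pd i K) :=
  ⟨measurable_pd i K, hK.2.imp fun _ h x => (h x).2⟩

lemma pd_comp_sub_const (i : Fin 3) (K : E3 → ℝ) (w x : E3) :
    pd i (fun v => K (v - w)) x = pd i K (x - w) := by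
  unfold pd
  simp only [sub_eq_add_neg, fderiv_comp_add_right]

lemma BddD.comp_sub_const {i : Fin 3} {K : E3 → ℝ} (hK : BddD i K) (w : E3) :
    BddD i (fun v => K (v - w)) := by
  obtain ⟨dK, M, hM⟩ := hK
  refine ⟨dK.comp (differentiable_id.sub_const w), M, fun x => ?_⟩
  rw [pd_comp_sub_const]
  exact hM _

lemma pd_comp_const_sub (i : Fin 3) (K : E3 → ℝ) (hK : Differentiable ℝ K) (w x : E3) :
    pd i (fun v => K (w - v)) x = - pd i K (w - x) := by
  unfold pd
  have h := (hK (w - x)).hasFDerivAt.comp x ((hasFDerivAt_id x).const_sub w)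
  have h' : HasFDerivAt (fun v => K (w - v)) _ x := h
  rw [h'.fderiv]
  simp

lemma BddD.comp_const_sub {i : Fin 3} {K : E3 → ℝ} (hK : BddD i K) (w : E3) :
    BddD i (fun v => K (w - v)) := by
  obtain ⟨dK, M, hM⟩ := hK
  refine ⟨dK.comp (differentiable_id.const_sub w), M, fun x => ?_⟩
  rw [pd_comp_const_sub i K dK, abs_neg]
  exact hM _

lemma tri_ibp {i : Fin 3} {K : E3 → ℝ} (hK : BddD i K) (φ g : 𝓢(E3, ℝ)) :
    tri K (pdS i φ) g = - tri (pd i K) φ g := by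
  unfold tri
  rw [Measure.volume_eq_prod, integral_prod_symm _ (hK.bddM.integrable _ g),
    integral_prod_symm _ (hK.bddM_pd.integrable _ g), ← integral_neg]
  refine integral_congr_ae (Filter.Eventually.of_forall fun w => ?_)
  simp only
  have h := ((hK.comp_sub_const w).ibp φ).2.2
  simp only [pd_comp_sub_const] at h
  rw [integral_mul_const, integral_mul_const, pdS_coe, h, neg_mul]

lemma conv_ibp {j : Fin 3} {K : E3 → ℝ} (hK : BddD j K) (g : 𝓢(E3, ℝ)) (v : E3) :
    conv K (pdS j g) v = conv (pd j K) g v := by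
  have h := ((hK.comp_const_sub v).ibp g).2.2
  simp only [pd_comp_const_sub j K hK.1] at h
  unfold conv
  rw [pdS_coe, h, ← integral_neg]
  simp

lemma bddD_aE {ε : ℝ} (hε : 0 < ε) (i j l : Fin 3) : BddD l (aE ε i j) := by
  refine ⟨differentiable_aE hε i j, 2 * (Real.sqrt ε)⁻¹ + 6 * ((Real.sqrt ε)⁻¹) ^ 2, fun x => ?_⟩
  have h1 := abs_aE_le hε i j x
  have h2 := abs_pd_aE_le hε i j l x
  have h3 := rho_le_eps hε x
  have h4 := rho_nonneg ε x
  have h5 : rho ε x ^ 2 ≤ ((Real.sqrt ε)⁻¹) ^ 2 := by gcongr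
  have h6 : 0 ≤ ((Real.sqrt ε)⁻¹) := by positivity
  constructor <;> nlinarith

lemma bddM_bE {ε : ℝ} (hε : 0 < ε) (i : Fin 3) : BddM (bE ε i) := by
  refine ⟨(differentiable_bE hε i).continuous.measurable, 5 * ((Real.sqrt ε)⁻¹) ^ 2, fun x => ?_⟩
  have h1 := abs_bE_le hε i x
  have h3 := rho_le_eps hε x
  have h4 := rho_nonneg ε x
  have h5 : rho ε x ^ 2 ≤ ((Real.sqrt ε)⁻¹) ^ 2 := by gcongr
  linarith

lemma bddD_bF (i : Fin 3) : BddD i (bF i) := by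
  refine ⟨differentiable_bF i, 8, fun x => ?_⟩
  have h1 := abs_bF_le i x
  have h2 := abs_dF_le i x
  have h3 := rho_one_le x
  have h4 := rho_nonneg 1 x
  rw [pd_bF_self]
  have h5 : rho 1 x ^ 2 ≤ 1 := pow_le_one₀ h4 h3
  have h6 : rho 1 x ^ 3 ≤ 1 := pow_le_one₀ h4 h3
  constructor <;> linarith

lemma sum_conv_aE {ε : ℝ} (hε : 0 < ε) (g : 𝓢(E3, ℝ)) (i : Fin 3) (v : E3) :
    ∑ j, conv (aE ε i j) (pdS j g) v = conv (bE ε i) g v := by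
  have h : ∀ j, conv (aE ε i j) (pdS j g) v = conv (pd j (aE ε i j)) g v :=
    fun j => conv_ibp (bddD_aE hε i j j) g v
  have hi : ∀ j, Integrable fun w => pd j (aE ε i j) (v - w) * g w := by
    intro j
    obtain ⟨m, M, hM⟩ := (bddD_aE hε i j j).bddM_pd
    exact (g.integrable (μ := volume)).bdd_mul (c := M)
      (by fun_prop : Measurable (fun w => pd j (aE ε i j) (v - w))).aestronglyMeasurable
      (Filter.Eventually.of_forall fun w => hM _)
  simp only [h]
  unfold conv
  rw [← integral_finsetSum _ fun j _ => hi j]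
  simp only [← sum_pd_aE hε, Finset.sum_mul]

/-- The integrand of the double integral, after the long-range part `bF` of the drift has been
integrated by parts in `v`, so that it hits `f` and not `H`. -/
noncomputable def Theta (ε : ℝ) (f H : E3 → ℝ) (v z : E3) : ℝ :=
  - (∑ i, ∑ j, aE ε i j z * (pd j f v * pd i H v))
    + (∑ i, (bE ε i z - bF i z) * (f v * pd i H v))
    - (∑ i, bF i z * (pd i f v * H v)) - (∑ i, dF i z) * (f v * H v)

/-- The derivative of `g` is moved onto the kernel, producing the drift `bE ε`, and then the
derivative of `H` off the long-range part `bF` of that drift. -/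
lemma weakT_eq {ε : ℝ} (hε : 0 < ε) (g f H : 𝓢(E3, ℝ)) :
    weakT (aE ε) g f H = ∫ p : E3 × E3, Theta ε f H p.1 (p.1 - p.2) * g p.2 := by
  have mA := fun i j => (bddD_aE hε i j 0).bddM
  have mB := bddM_bE hε
  have mF := fun i => (bddD_bF i).bddM
  have mD : ∀ i, BddM (dF i) := fun i => by
    have h : pd i (bF i) = dF i := funext fun z => pd_bF_self i z
    rw [← h]
    exact (bddD_bF i).bddM_pd
  have mBF : ∀ i, BddM (fun z => bE ε i z - bF i z) := by
    intro i
    obtain ⟨m1, M, hM⟩ := mB i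
    obtain ⟨m2, N, hN⟩ := mF i
    exact ⟨m1.sub m2, M + N, fun x => (abs_sub _ _).trans (add_le_add (hM x) (hN x))⟩
  have s1 : ∀ i, ∫ w, flux (aE ε) g f i w * pd i H w
      = (∑ j, tri (aE ε i j) (mulS (pdS j f) (pdS i H)) g)
        - tri (bE ε i) (mulS f (pdS i H)) g := by
    intro i
    have e : (fun w => flux (aE ε) g f i w * pd i H w)
        = fun w => (∑ j, conv (aE ε i j) g w * mulS (pdS j f) (pdS i H) w)
          - conv (bE ε i) g w * mulS f (pdS i H) w := by
      funext w
      unfold flux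
      simp only [mulS_apply, ← sum_conv_aE hε, Finset.sum_mul, ← Finset.sum_sub_distrib]
      refine Finset.sum_congr rfl fun j _ => ?_
      rw [pdS_coe j f, pdS_coe i H]
      ring
    rw [e, integral_sub (integrable_finsetSum _ fun j _ => integrable_conv_mul (mA i j) _ g)
      (integrable_conv_mul (mB i) _ g),
      integral_finsetSum _ fun j _ => integrable_conv_mul (mA i j) _ g]
    simp only [tri_eq_conv (mA i _), tri_eq_conv (mB i)]
  have s2 : ∀ i, tri (bE ε i) (mulS f (pdS i H)) g
      = tri (fun z => bE ε i z - bF i z) (mulS f (pdS i H)) g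
        - tri (bF i) (mulS (pdS i f) H) g - tri (dF i) (mulS f H) g := by
    intro i
    have h := tri_ibp (bddD_bF i) (mulS f H) g
    rw [show pd i (bF i) = dF i from funext fun z => pd_bF_self i z] at h
    have h1 : tri (fun z => bE ε i z - bF i z) (mulS f (pdS i H)) g
        = tri (bE ε i) (mulS f (pdS i H)) g - tri (bF i) (mulS f (pdS i H)) g := by
      unfold tri
      rw [← integral_sub ((mB i).integrable _ g) ((mF i).integrable _ g)]
      simp only [sub_mul]
    have h2 : tri (bF i) (pdS i (mulS f H)) g
        = tri (bF i) (mulS f (pdS i H)) g + tri (bF i) (mulS (pdS i f) H) g := by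
      unfold tri
      rw [← integral_add ((mF i).integrable _ g) ((mF i).integrable _ g)]
      refine integral_congr_ae (Filter.Eventually.of_forall fun p => ?_)
      have e : ⇑(mulS f H) = fun v => f v * H v := funext (mulS_apply f H)
      simp only [mulS_apply, pdS_coe]
      rw [e, pd_mul i f.differentiableAt H.differentiableAt]
      ring
    linarith
  have iA := fun i j => (mA i j).integrable (mulS (pdS j f) (pdS i H)) g
  have iBF := fun i => (mBF i).integrable (mulS f (pdS i H)) g
  have iF := fun i => (mF i).integrable (mulS (pdS i f) H) g
  have iD := fun i => (mD i).integrable (mulS f H) g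
  have e : (fun p : E3 × E3 => Theta ε f H p.1 (p.1 - p.2) * g p.2) = fun p =>
      - ∑ i, ((∑ j, aE ε i j (p.1 - p.2) * mulS (pdS j f) (pdS i H) p.1 * g p.2)
        - ((bE ε i (p.1 - p.2) - bF i (p.1 - p.2)) * mulS f (pdS i H) p.1 * g p.2
          - bF i (p.1 - p.2) * mulS (pdS i f) H p.1 * g p.2
          - dF i (p.1 - p.2) * mulS f H p.1 * g p.2)) := by
    funext p
    simp only [Theta, mulS_apply, pdS_coe, Fin.sum_univ_three]
    ring
  have i1 : ∀ i, Integrable fun p : E3 × E3 =>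
      ∑ j, aE ε i j (p.1 - p.2) * mulS (pdS j f) (pdS i H) p.1 * g p.2 :=
    fun i => integrable_finsetSum _ fun j _ => iA i j
  have i2 : ∀ i, Integrable fun p : E3 × E3 =>
      (bE ε i (p.1 - p.2) - bF i (p.1 - p.2)) * mulS f (pdS i H) p.1 * g p.2
          - bF i (p.1 - p.2) * mulS (pdS i f) H p.1 * g p.2 :=
    fun i => (iBF i).sub (iF i)
  have i3 : ∀ i, Integrable fun p : E3 × E3 =>
      (bE ε i (p.1 - p.2) - bF i (p.1 - p.2)) * mulS f (pdS i H) p.1 * g p.2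
          - bF i (p.1 - p.2) * mulS (pdS i f) H p.1 * g p.2
          - dF i (p.1 - p.2) * mulS f H p.1 * g p.2 :=
    fun i => (i2 i).sub (iD i)
  have i4 : ∀ i, Integrable fun p : E3 × E3 =>
      (∑ j, aE ε i j (p.1 - p.2) * mulS (pdS j f) (pdS i H) p.1 * g p.2)
        - ((bE ε i (p.1 - p.2) - bF i (p.1 - p.2)) * mulS f (pdS i H) p.1 * g p.2
          - bF i (p.1 - p.2) * mulS (pdS i f) H p.1 * g p.2
          - dF i (p.1 - p.2) * mulS f H p.1 * g p.2) :=
    fun i => (i1 i).sub (i3 i)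
  unfold weakT
  rw [e, integral_neg, integral_finsetSum _ fun i _ => i4 i]
  congr 1
  refine Finset.sum_congr rfl fun i _ => ?_
  rw [s1, s2, integral_sub (i1 i) (i3 i), integral_finsetSum _ fun j _ => iA i j,
    integral_sub (i2 i) (iD i), integral_sub (iBF i) (iF i)]
  rfl

/-! ### Pointwise bounds on the integrand -/

/-- The Lagrange identity turns the quadratic form of the regularized kernel into products of the
components of the cross products `z × X` and `z × Y`. -/
lemma aE_form {ε : ℝ} (hε : 0 < ε) (z : E3) (X Y : Fin 3 → ℝ) :
    ∑ i, ∑ j, aE ε i j z * (X j * Y i) = rho ε z ^ 3 *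
      (ε * (X 0 * Y 0 + X 1 * Y 1 + X 2 * Y 2)
        + ((z 0 * X 1 - z 1 * X 0) * (z 0 * Y 1 - z 1 * Y 0)
          + (z 0 * X 2 - z 2 * X 0) * (z 0 * Y 2 - z 2 * Y 0)
          + (z 1 * X 2 - z 2 * X 1) * (z 1 * Y 2 - z 2 * Y 1))) := by
  have h := rho_sq hε z
  rw [norm_sq_coord] at h
  have h1 : rho ε z = rho ε z ^ 3 * (ε + (z 0 ^ 2 + z 1 ^ 2 + z 2 ^ 2)) := by
    linear_combination (-rho ε z) * h
  simp only [aE, Fin.sum_univ_three, pow_one]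
  simp only [Fin.isValue, if_true, Fin.reduceEq, if_false]
  linear_combination (X 0 * Y 0 + X 1 * Y 1 + X 2 * Y 2) * h1

lemma abs_mul_le {a b A B : ℝ} (ha : |a| ≤ A) (hb : |b| ≤ B) : |a * b| ≤ A * B := by
  rw [abs_mul]
  exact mul_le_mul ha hb (abs_nonneg _) ((abs_nonneg _).trans ha)

/-- If the tangential components `v × X`, `v × Y` are also controlled, then the quadratic form
of the kernel at `z = v - w` decays like `⟨v⟩⁻³`, at the cost of the factor `⟨w⟩³`. -/
lemma aE_bound {ε : ℝ} (hε : 0 < ε) (hε1 : ε ≤ 1) (v w : E3) (hz : v - w ≠ 0)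
    (X Y : Fin 3 → ℝ) (A B : ℝ) (hX : ∀ i, |X i| ≤ A) (hY : ∀ i, |Y i| ≤ B)
    (hXr : ∀ i j, |v i * X j - v j * X i| ≤ A) (hYr : ∀ i j, |v i * Y j - v j * Y i| ≤ B) :
    |∑ i, ∑ j, aE ε i j (v - w) * (X j * Y i)|
      ≤ 240 * jap w ^ 3 * (jap v ^ 3)⁻¹ * (1 + ‖v - w‖⁻¹) * (A * B) := by
  rw [aE_form hε]
  have A0 : 0 ≤ A := (abs_nonneg _).trans (hX 0)
  have B0 : 0 ≤ B := (abs_nonneg _).trans (hY 0)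
  have hzp : 0 < ‖v - w‖ := norm_pos_iff.2 hz
  have hw1 := one_le_jap w
  have hv0 := jap_pos v
  have c1 : ∀ (U : Fin 3 → ℝ) (A : ℝ), (∀ i, |U i| ≤ A) → (∀ i j, |v i * U j - v j * U i| ≤ A) →
      ∀ i j, |(v - w) i * U j - (v - w) j * U i| ≤ 3 * jap w * A := by
    intro U A h1 h2 i j
    have A0 : 0 ≤ A := (abs_nonneg _).trans (h1 0)
    have e : (v - w) i * U j - (v - w) j * U i
        = (v i * U j - v j * U i) + (w j * U i - w i * U j) := by
      simp only [PiLp.sub_apply]; ring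
    rw [e]
    have h3 : ∀ i j, |w i * U j| ≤ jap w * A := fun i j =>
      abs_mul_le ((abs_coord_le w i).trans (norm_le_jap w)) (h1 j)
    have h4 := abs_add_le (v i * U j - v j * U i) (w j * U i - w i * U j)
    have h5 := abs_sub (w j * U i) (w i * U j)
    nlinarith [h2 i j, h3 i j, h3 j i]
  have c2 : ∀ (U : Fin 3 → ℝ) (A : ℝ), (∀ i, |U i| ≤ A) →
      ∀ i j, |(v - w) i * U j - (v - w) j * U i| ≤ 2 * ‖v - w‖ * A := by
    intro U A h1 i j
    have h3 : ∀ i j, |(v - w) i * U j| ≤ ‖v - w‖ * A := fun i j =>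
      abs_mul_le (abs_coord_le _ i) (h1 j)
    have h5 := abs_sub ((v - w) i * U j) ((v - w) j * U i)
    linarith [h3 i j, h3 j i]
  have x1 := c1 X A hX hXr
  have y1 := c1 Y B hY hYr
  have x2 := c2 X A hX
  have y2 := c2 Y B hY
  set z := v - w with hzdef
  set S := (z 0 * X 1 - z 1 * X 0) * (z 0 * Y 1 - z 1 * Y 0)
          + (z 0 * X 2 - z 2 * X 0) * (z 0 * Y 2 - z 2 * Y 0)
          + (z 1 * X 2 - z 2 * X 1) * (z 1 * Y 2 - z 2 * Y 1) with hS
  set D := X 0 * Y 0 + X 1 * Y 1 + X 2 * Y 2 with hD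
  have hDb : |D| ≤ 3 * (A * B) := by
    have := abs_add_three (X 0 * Y 0) (X 1 * Y 1) (X 2 * Y 2)
    linarith [abs_mul_le (hX 0) (hY 0), abs_mul_le (hX 1) (hY 1), abs_mul_le (hX 2) (hY 2)]
  have hS3 := abs_add_three ((z 0 * X 1 - z 1 * X 0) * (z 0 * Y 1 - z 1 * Y 0))
    ((z 0 * X 2 - z 2 * X 0) * (z 0 * Y 2 - z 2 * Y 0))
    ((z 1 * X 2 - z 2 * X 1) * (z 1 * Y 2 - z 2 * Y 1))
  have hS1 : |S| ≤ 27 * jap w ^ 2 * (A * B) := by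
    have := abs_mul_le (x1 0 1) (y1 0 1)
    have := abs_mul_le (x1 0 2) (y1 0 2)
    have := abs_mul_le (x1 1 2) (y1 1 2)
    linarith
  have hS2 : |S| ≤ 12 * ‖z‖ ^ 2 * (A * B) := by
    have := abs_mul_le (x2 0 1) (y2 0 1)
    have := abs_mul_le (x2 0 2) (y2 0 2)
    have := abs_mul_le (x2 1 2) (y2 1 2)
    linarith
  have hr0 := rho_nonneg ε z
  have hr1 := rho_le_inv hε z hz
  have hAB := mul_nonneg A0 B0
  have hT : |ε * D + S| ≤ ε * (3 * (A * B)) + |S| := by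
    refine (abs_add_le _ _).trans ?_
    rw [abs_mul, abs_of_pos hε]
    gcongr
  have hJ := jap_le_add v w
  rw [← hzdef] at hJ
  rw [abs_mul, abs_of_nonneg (by positivity)]
  rcases le_or_gt ‖z‖ (jap w) with hc | hc
  · have h1 : rho ε z ^ 3 * |ε * D + S| ≤ 15 * ‖z‖⁻¹ * (A * B) := by
      have e1 := eps_mul_rho_sq_le hε z
      have e2 := norm_mul_rho_le hε z
      have e3 : (‖z‖ * rho ε z) ^ 2 ≤ 1 := pow_le_one₀ (by positivity) e2
      calc rho ε z ^ 3 * |ε * D + S|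
          ≤ rho ε z ^ 3 * (ε * (3 * (A * B)) + 12 * ‖z‖ ^ 2 * (A * B)) := by
            gcongr
            exact hT.trans (by gcongr)
        _ = rho ε z * (3 * (ε * rho ε z ^ 2) + 12 * (‖z‖ * rho ε z) ^ 2) * (A * B) := by ring
        _ ≤ ‖z‖⁻¹ * (3 * 1 + 12 * 1) * (A * B) := by gcongr
        _ = 15 * ‖z‖⁻¹ * (A * B) := by ring
    have h2 : jap v ^ 3 ≤ 8 * jap w ^ 3 := by
      calc jap v ^ 3 ≤ (2 * jap w) ^ 3 := by gcongr; linarith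
        _ = _ := by ring
    have h3 : 1 ≤ 8 * jap w ^ 3 * (jap v ^ 3)⁻¹ := by
      rw [← div_eq_mul_inv, one_le_div (by positivity)]
      exact h2
    have h4 : 0 ≤ ‖z‖⁻¹ := by positivity
    calc _ ≤ 15 * ‖z‖⁻¹ * (A * B) := h1
      _ ≤ 15 * (1 + ‖z‖⁻¹) * (A * B) * (8 * jap w ^ 3 * (jap v ^ 3)⁻¹) := by
          rw [← mul_one (15 * ‖z‖⁻¹ * (A * B))]
          gcongr
          linarith
      _ = 120 * (jap w ^ 3 * (jap v ^ 3)⁻¹ * (1 + ‖z‖⁻¹) * (A * B)) := by ring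
      _ ≤ 240 * (jap w ^ 3 * (jap v ^ 3)⁻¹ * (1 + ‖z‖⁻¹) * (A * B)) := by
          gcongr
          norm_num
      _ = _ := by ring
  · have h1 : |ε * D + S| ≤ 30 * jap w ^ 3 * (A * B) := by
      have h5 : (1 : ℝ) ≤ jap w ^ 3 := one_le_pow₀ hw1
      have h6 : jap w ^ 2 ≤ jap w ^ 3 := pow_le_pow_right₀ hw1 (by norm_num)
      have h7 : ε * (3 * (A * B)) ≤ 1 * (3 * (A * B)) := by gcongr
      have h8 := mul_le_mul_of_nonneg_right h5 hAB
      have h9 := mul_le_mul_of_nonneg_right h6 hAB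
      linarith
    have h2 : rho ε z ^ 3 ≤ 8 * (jap v ^ 3)⁻¹ := by
      calc rho ε z ^ 3 ≤ (2 * (jap v)⁻¹) ^ 3 := by
            gcongr
            refine hr1.trans ?_
            rw [← div_eq_mul_inv, inv_le_comm₀ hzp (by positivity), inv_div]
            linarith
        _ = _ := by ring
    have h4 : 0 ≤ ‖z‖⁻¹ := by positivity
    calc _ ≤ (8 * (jap v ^ 3)⁻¹) * (30 * jap w ^ 3 * (A * B)) := by gcongr
      _ = 240 * jap w ^ 3 * (jap v ^ 3)⁻¹ * 1 * (A * B) := by ring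
      _ ≤ _ := by gcongr; linarith

/-- The long-range part cancels the tail of the drift kernel up to `O(|z|⁻³)`. -/
lemma bE_sub_bF_bound {ε : ℝ} (hε : 0 < ε) (hε1 : ε ≤ 1) (v w : E3) (hz : v - w ≠ 0) (i : Fin 3) :
    |bE ε i (v - w) - bF i (v - w)|
      ≤ 72 * jap w ^ 3 * (jap v ^ 3)⁻¹ * (1 + sing 2 (v - w)) := by
  have hJ := jap_le_add v w
  have hzp : 0 < ‖v - w‖ := norm_pos_iff.2 hz
  have hw1 := one_le_jap w
  have hv0 := jap_pos v
  set z := v - w with hzdef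
  have hr0 := rho_nonneg ε z
  have hr1 := rho_le_inv hε z hz
  have hs0 := rho_nonneg 1 z
  have hs1 := rho_le_inv one_pos z hz
  rcases lt_or_ge ‖z‖ 1 with hc | hc
  · have e : sing 2 z = ‖z‖⁻¹ ^ 2 := by simp [sing, hc]
    have h1 : |bE ε i z - bF i z| ≤ 7 * ‖z‖⁻¹ ^ 2 := by
      have h1 := abs_bE_le hε i z
      have h2 := abs_bF_le i z
      have h3 : rho ε z ^ 2 ≤ ‖z‖⁻¹ ^ 2 := by gcongr
      have h4 : rho 1 z ^ 2 ≤ ‖z‖⁻¹ ^ 2 := by gcongr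
      linarith [abs_sub (bE ε i z) (bF i z)]
    have h2 : jap v ^ 3 ≤ 8 * jap w ^ 3 := by
      calc jap v ^ 3 ≤ (2 * jap w) ^ 3 := by gcongr; linarith
        _ = _ := by ring
    have h3 : 1 ≤ 8 * jap w ^ 3 * (jap v ^ 3)⁻¹ := by
      rw [← div_eq_mul_inv, one_le_div (by positivity)]
      exact h2
    rw [e]
    calc _ ≤ 7 * ‖z‖⁻¹ ^ 2 * 1 := by linarith
      _ ≤ 9 * (1 + ‖z‖⁻¹ ^ 2) * (8 * jap w ^ 3 * (jap v ^ 3)⁻¹) := by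
          have : 0 ≤ ‖z‖⁻¹ ^ 2 := by positivity
          gcongr <;> linarith
      _ = _ := by ring
  · have e : sing 2 z = 0 := by simp [sing, not_lt.2 hc]
    set a := rho ε z with ha
    set b := rho 1 z with hb
    set t := ‖z‖⁻¹ with ht
    have ht0 : 0 < t := by positivity
    have htz : ‖z‖ * t = 1 := mul_inv_cancel₀ hzp.ne'
    have hap : 0 < a := rho_pos hε z
    have hbp : 0 < b := rho_pos one_pos z
    have e1 := rho_sq hε z
    have e2 := rho_sq one_pos z
    have hd : a ^ 2 - b ^ 2 = (1 - ε) * (a ^ 2 * b ^ 2) := by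
      linear_combination b ^ 2 * e1 - a ^ 2 * e2
    have hab : b ≤ a := by
      have : 0 ≤ a ^ 2 - b ^ 2 := by
        rw [hd]
        have : 0 ≤ 1 - ε := by linarith
        positivity
      exact (sq_le_sq₀ hbp.le hap.le).1 (by linarith)
    have hd2 : (a - b) * (a + b) ≤ a ^ 2 * b ^ 2 := by
      have : (a - b) * (a + b) = (1 - ε) * (a ^ 2 * b ^ 2) := by rw [← hd]; ring
      rw [this]
      have : 0 ≤ ε * (a ^ 2 * b ^ 2) := by positivity
      linarith
    have hd3 : a - b ≤ a * b ^ 2 := by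
      have h : (a - b) * a ≤ a * b ^ 2 * a := by
        have : 0 ≤ (a - b) * b := mul_nonneg (by linarith) hbp.le
        nlinarith
      exact le_of_mul_le_mul_right h hap
    have hd4 : a ^ 3 - b ^ 3 ≤ 3 * t ^ 5 := by
      calc a ^ 3 - b ^ 3 = (a - b) * (a ^ 2 + a * b + b ^ 2) := by ring
        _ ≤ (a * b ^ 2) * (a ^ 2 + a * a + a ^ 2) := by
            gcongr
        _ = 3 * (a ^ 3 * b ^ 2) := by ring
        _ ≤ 3 * (t ^ 3 * t ^ 2) := by gcongr
        _ = 3 * t ^ 5 := by ring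
    have hd5 : 0 ≤ a ^ 3 - b ^ 3 := by
      have : b ^ 3 ≤ a ^ 3 := by gcongr
      linarith
    have h1 : |bE ε i z - bF i z| ≤ 9 * t ^ 3 := by
      have e : bE ε i z - bF i z = -(z i * (2 * (a ^ 3 - b ^ 3) + 3 * ε * a ^ 5)) := by
        simp only [bE, bF, ← ha, ← hb]; ring
      have ht1 : t ≤ 1 := inv_le_one_of_one_le₀ hc
      rw [e, abs_neg]
      have h6 : |2 * (a ^ 3 - b ^ 3) + 3 * ε * a ^ 5| ≤ 9 * t ^ 5 := by
        rw [abs_of_nonneg (by positivity)]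
        have h7 : ε * a ^ 5 ≤ 1 * t ^ 5 := by gcongr
        linarith
      calc _ ≤ ‖z‖ * (9 * t ^ 5) := abs_mul_le (abs_coord_le z i) h6
        _ = (‖z‖ * t) * 9 * t ^ 3 * t := by ring
        _ ≤ (‖z‖ * t) * 9 * t ^ 3 * 1 := by gcongr
        _ = 9 * t ^ 3 := by rw [htz]; ring
    have h2 : t ≤ 2 * jap w * (jap v)⁻¹ := by
      rw [ht, ← div_eq_mul_inv, inv_le_comm₀ hzp (by positivity), inv_div, div_le_iff₀ (by positivity)]
      nlinarith
    rw [e]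
    calc _ ≤ 9 * t ^ 3 := h1
      _ ≤ 9 * (2 * jap w * (jap v)⁻¹) ^ 3 := by gcongr
      _ = _ := by ring

/-- The Peetre inequality for the weight `⟨z⟩⁻¹`. -/
lemma rho_one_peetre (v w : E3) : rho 1 (v - w) ≤ 2 * jap w * (jap v)⁻¹ := by
  have hJ := jap_le_add v w
  have hw1 := one_le_jap w
  have hv0 := jap_pos v
  have h1 := norm_mul_rho_le one_pos (v - w)
  have h2 := rho_one_le (v - w)
  have h3 := rho_nonneg 1 (v - w)
  rw [← div_eq_mul_inv, le_div_iff₀ hv0]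
  nlinarith

lemma bF_bound (v w : E3) (i : Fin 3) :
    |bF i (v - w)| ≤ 8 * jap w ^ 3 * (jap v ^ 2)⁻¹ := by
  have hw1 := one_le_jap w
  have hv0 := jap_pos v
  have h3 := rho_nonneg 1 (v - w)
  have hw0 := jap_pos w
  calc _ ≤ 2 * rho 1 (v - w) ^ 2 := abs_bF_le i _
    _ ≤ 2 * (2 * jap w * (jap v)⁻¹) ^ 2 := by gcongr; exact rho_one_peetre v w
    _ = 8 * jap w ^ 2 * (jap v ^ 2)⁻¹ := by ring
    _ ≤ _ := by
      gcongr
      norm_num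

lemma sum_dF_bound (v w : E3) :
    |∑ i, dF i (v - w)| ≤ 48 * jap w ^ 3 * (jap v ^ 3)⁻¹ := by
  have h3 := rho_nonneg 1 (v - w)
  have h4 := rho_one_le (v - w)
  have hv0 := jap_pos v
  have hw0 := jap_pos w
  rw [sum_dF, abs_mul, abs_of_nonneg (by positivity : 0 ≤ rho 1 (v - w) ^ 5)]
  calc |(-6 : ℝ)| * rho 1 (v - w) ^ 5 = 6 * (rho 1 (v - w) ^ 3 * rho 1 (v - w) ^ 2) := by
        rw [abs_of_neg (by norm_num)]; ring
    _ ≤ 6 * ((2 * jap w * (jap v)⁻¹) ^ 3 * 1) := by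
        gcongr
        · exact rho_one_peetre v w
        · exact pow_le_one₀ h3 h4
    _ = _ := by ring

/-- The sum of the absolute values of all the derivatives entering the anisotropic norm. -/
noncomputable def PP (F : E3 → ℝ) (v : E3) : ℝ :=
  |F v| + (|pd 0 F v| + |pd 1 F v| + |pd 2 F v|)
    + (|rotD 0 1 F v| + |rotD 0 2 F v| + |rotD 1 2 F v|)

lemma PP_nonneg (F : E3 → ℝ) (v : E3) : 0 ≤ PP F v := by unfold PP; positivity

lemma abs_le_PP (F : E3 → ℝ) (v : E3) : |F v| ≤ PP F v := by
  unfold PP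
  have : 0 ≤ |pd 0 F v| + |pd 1 F v| + |pd 2 F v| := by positivity
  have : 0 ≤ |rotD 0 1 F v| + |rotD 0 2 F v| + |rotD 1 2 F v| := by positivity
  linarith

lemma pd_le_PP (F : E3 → ℝ) (v : E3) (i : Fin 3) : |F v| + |pd i F v| ≤ PP F v := by
  unfold PP
  have : 0 ≤ |rotD 0 1 F v| + |rotD 0 2 F v| + |rotD 1 2 F v| := by positivity
  have := abs_nonneg (pd 0 F v)
  have := abs_nonneg (pd 1 F v)
  have := abs_nonneg (pd 2 F v)
  fin_cases i <;> simp <;> linarith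

lemma rot_le_PP (F : E3 → ℝ) (v : E3) (i j : Fin 3) :
    |v i * pd j F v - v j * pd i F v| ≤ PP F v := by
  have h0 := PP_nonneg F v
  unfold PP rotD at *
  have := abs_nonneg (F v)
  have := abs_nonneg (pd 0 F v)
  have := abs_nonneg (pd 1 F v)
  have := abs_nonneg (pd 2 F v)
  have h1 := abs_nonneg (v 0 * pd 1 F v - v 1 * pd 0 F v)
  have h2 := abs_nonneg (v 0 * pd 2 F v - v 2 * pd 0 F v)
  have h3 := abs_nonneg (v 1 * pd 2 F v - v 2 * pd 1 F v)
  have e1 := abs_sub_comm (v 0 * pd 1 F v) (v 1 * pd 0 F v)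
  have e2 := abs_sub_comm (v 0 * pd 2 F v) (v 2 * pd 0 F v)
  have e3 := abs_sub_comm (v 1 * pd 2 F v) (v 2 * pd 1 F v)
  fin_cases i <;> fin_cases j <;> simp <;> linarith

lemma coord_jap_le (v : E3) (i : Fin 3) : |v i * jap v ^ (-2 : ℝ)| ≤ 1 := by
  have h1 := one_le_jap v
  have h2 : |v i| ≤ jap v := (abs_coord_le v i).trans (norm_le_jap v)
  have h3 : jap v ^ (-2 : ℝ) = (jap v ^ 2)⁻¹ := by
    rw [Real.rpow_neg (jap_pos v).le]; norm_cast
  rw [h3, abs_mul, abs_of_pos (a := (jap v ^ 2)⁻¹) (by have := jap_pos v; positivity),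
    ← div_eq_mul_inv, div_le_one (by have := jap_pos v; positivity)]
  nlinarith

/-- The vector `∇F + s v ⟨v⟩⁻² F` has components and tangential components bounded by `PP F`. -/
lemma twist_bound (s : ℝ) (F : E3 → ℝ) (v : E3) :
    (∀ i, |pd i F v + s * v i * jap v ^ (-2 : ℝ) * F v| ≤ (1 + |s|) * PP F v) ∧
    ∀ i j, |v i * (pd j F v + s * v j * jap v ^ (-2 : ℝ) * F v)
      - v j * (pd i F v + s * v i * jap v ^ (-2 : ℝ) * F v)| ≤ (1 + |s|) * PP F v := by
  have h0 := PP_nonneg F v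
  constructor
  · intro i
    have h1 : |s * v i * jap v ^ (-2 : ℝ) * F v| ≤ |s| * PP F v := by
      have e : s * v i * jap v ^ (-2 : ℝ) * F v = s * ((v i * jap v ^ (-2 : ℝ)) * F v) := by ring
      rw [e, abs_mul s]
      gcongr
      have := abs_mul_le (coord_jap_le v i) (abs_le_PP F v)
      linarith
    have h2 := pd_le_PP F v i
    have := abs_nonneg (F v)
    have := abs_add_le (pd i F v) (s * v i * jap v ^ (-2 : ℝ) * F v)
    linarith
  · intro i j
    have e : v i * (pd j F v + s * v j * jap v ^ (-2 : ℝ) * F v)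
      - v j * (pd i F v + s * v i * jap v ^ (-2 : ℝ) * F v) = v i * pd j F v - v j * pd i F v := by
      ring
    rw [e]
    have := rot_le_PP F v i j
    have := mul_nonneg (abs_nonneg s) h0
    linarith

/-- `⟨v⟩^{k-2} (|∂_0 f| + |∂_1 f| + |∂_2 f|)`. -/
noncomputable def RR (k : ℝ) (f : E3 → ℝ) (v : E3) : ℝ :=
  jap v ^ (k - 2) * (|pd 0 f v| + |pd 1 f v| + |pd 2 f v|)

/-- The pointwise bound on the integrand, uniform in `ε`. The weight `⟨v⟩^{2k}` is shared between
`f` and `h`, which replaces `∇F` and `∇G` by `∇F - k v ⟨v⟩⁻² F` and `∇G + k v ⟨v⟩⁻² G`. -/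
lemma Theta_bound (k ε : ℝ) (hε : 0 < ε) (hε1 : ε ≤ 1) (f h : 𝓢(E3, ℝ)) (v w : E3)
    (hz : v - w ≠ 0) :
    |Theta ε f (wS (2 * k) h) v (v - w)| ≤ 1000 * (1 + |k|) ^ 2 * jap w ^ 3 *
      ((2 + sing 1 (v - w)) * ((jap v ^ 3)⁻¹ * (PP (wS k f) v * PP (wS k h) v))
        + sing 2 (v - w) * ((jap v ^ 3)⁻¹ * (|wS k f v| * PP (wS k h) v))
        + RR k f v * |wS k h v|) := by
  have hJ := jap_pos v
  have hw := jap_pos w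
  have hw1 := one_le_jap w
  set F := wS k f with hF
  set G := wS k h with hG
  set H := wS (2 * k) h with hH
  set X : Fin 3 → ℝ := fun i => pd i F v + (-k) * v i * jap v ^ (-2 : ℝ) * F v with hX
  set Y : Fin 3 → ℝ := fun i => pd i G v + k * v i * jap v ^ (-2 : ℝ) * G v with hY
  have hkk : jap v ^ (2 * k) = jap v ^ k * jap v ^ k := by
    rw [← Real.rpow_add hJ]; congr 1; ring
  have hFX : ∀ i, X i = jap v ^ k * pd i f v := by
    intro i
    simp only [hX, hF, pd_wS, wS_apply]
    ring
  have hHY : ∀ i, pd i H v = jap v ^ k * Y i := by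
    intro i
    simp only [hY, hG, hH, pd_wS, wS_apply, hkk]
    ring
  have hHG : H v = jap v ^ k * G v := by
    simp only [hG, hH, wS_apply, hkk]; ring
  have hFf : F v = jap v ^ k * f v := wS_apply k f v
  have e : Theta ε f H v (v - w) =
      - (∑ i, ∑ j, aE ε i j (v - w) * (X j * Y i))
      + (∑ i, (bE ε i (v - w) - bF i (v - w)) * (F v * Y i))
      - (∑ i, bF i (v - w) * ((jap v ^ k * pd i f v) * G v))
      - (∑ i, dF i (v - w)) * (F v * G v) := by
    unfold Theta
    simp only [hHY, hHG, hFX, hFf]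
    congr 1
    · congr 1
      · congr 1
        · congr 1
          refine Finset.sum_congr rfl fun i _ => Finset.sum_congr rfl fun j _ => ?_
          ring
        · refine Finset.sum_congr rfl fun i _ => ?_
          ring
      · refine Finset.sum_congr rfl fun i _ => ?_
        ring
    · ring
  obtain ⟨hX1, hX2⟩ := twist_bound (-k) F v
  obtain ⟨hY1, hY2⟩ := twist_bound k G v
  rw [abs_neg] at hX1 hX2
  set K := 1 + |k| with hK
  have hK1 : 1 ≤ K := by have := abs_nonneg k; linarith
  have hPF := PP_nonneg F v
  have hPG := PP_nonneg G v
  have t1 := aE_bound hε hε1 v w hz X Y _ _ hX1 hY1 hX2 hY2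
  have t2 : |∑ i, (bE ε i (v - w) - bF i (v - w)) * (F v * Y i)|
      ≤ 3 * ((72 * jap w ^ 3 * (jap v ^ 3)⁻¹ * (1 + sing 2 (v - w))) * (|F v| * (K * PP G v))) := by
    rw [Fin.sum_univ_three]
    refine (abs_add_three _ _ _).trans ?_
    have h := fun i => abs_mul_le (bE_sub_bF_bound hε hε1 v w hz i)
      (abs_mul_le (le_refl |F v|) (hY1 i))
    linarith [h 0, h 1, h 2]
  have hk2 : jap v ^ (k - 2) = (jap v ^ 2)⁻¹ * jap v ^ k := by
    rw [Real.rpow_sub hJ]; norm_cast; rw [div_eq_mul_inv, mul_comm]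
  have t3 : |∑ i, bF i (v - w) * ((jap v ^ k * pd i f v) * G v)|
      ≤ 8 * jap w ^ 3 * (RR k f v * |G v|) := by
    rw [Fin.sum_univ_three]
    refine (abs_add_three _ _ _).trans ?_
    have h : ∀ i, |bF i (v - w) * ((jap v ^ k * pd i f v) * G v)|
        ≤ 8 * jap w ^ 3 * (jap v ^ (k - 2) * |pd i f v| * |G v|) := by
      intro i
      have h1 : |jap v ^ k * pd i f v * G v| = jap v ^ k * |pd i f v| * |G v| := by
        rw [abs_mul, abs_mul, abs_of_pos (Real.rpow_pos_of_pos hJ k)]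
      refine (abs_mul_le (bF_bound v w i) h1.le).trans (le_of_eq ?_)
      rw [hk2]
      ring
    unfold RR
    linarith [h 0, h 1, h 2]
  have t4 : |(∑ i, dF i (v - w)) * (F v * G v)|
      ≤ 48 * jap w ^ 3 * (jap v ^ 3)⁻¹ * (PP F v * PP G v) :=
    abs_mul_le (sum_dF_bound v w) (abs_mul_le (abs_le_PP F v) (abs_le_PP G v))
  have t0 := abs_sub (- (∑ i, ∑ j, aE ε i j (v - w) * (X j * Y i))
      + (∑ i, (bE ε i (v - w) - bF i (v - w)) * (F v * Y i))
      - (∑ i, bF i (v - w) * ((jap v ^ k * pd i f v) * G v)))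
      ((∑ i, dF i (v - w)) * (F v * G v))
  have t0' := abs_sub (- (∑ i, ∑ j, aE ε i j (v - w) * (X j * Y i))
      + (∑ i, (bE ε i (v - w) - bF i (v - w)) * (F v * Y i)))
      (∑ i, bF i (v - w) * ((jap v ^ k * pd i f v) * G v))
  have t0'' := abs_add_le (- (∑ i, ∑ j, aE ε i j (v - w) * (X j * Y i)))
      (∑ i, (bE ε i (v - w) - bF i (v - w)) * (F v * Y i))
  rw [abs_neg] at t0''
  rw [e]
  have hs1 := sing_nonneg 1 (v - w)
  have hs2 := sing_nonneg 2 (v - w)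
  have hn := norm_inv_le_sing (v - w)
  have hR : 0 ≤ RR k f v := by unfold RR; positivity
  have hc : (0 : ℝ) ≤ jap w ^ 3 := by positivity
  have hi : (0 : ℝ) ≤ (jap v ^ 3)⁻¹ := by positivity
  set q := PP F v * PP G v with hq
  have hq0 : 0 ≤ q := mul_nonneg hPF hPG
  set r := |F v| * PP G v with hr
  have hr0 : 0 ≤ r := mul_nonneg (abs_nonneg _) hPG
  have hrq : r ≤ q := mul_le_mul_of_nonneg_right (abs_le_PP F v) hPG
  have hK2 : K ≤ K ^ 2 := by nlinarith
  have u1 : 240 * jap w ^ 3 * (jap v ^ 3)⁻¹ * (1 + ‖v - w‖⁻¹) * (K * PP F v * (K * PP G v))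
      ≤ 240 * K ^ 2 * jap w ^ 3 * ((2 + sing 1 (v - w)) * ((jap v ^ 3)⁻¹ * q)) := by
    calc _ = 240 * K ^ 2 * jap w ^ 3 * ((1 + ‖v - w‖⁻¹) * ((jap v ^ 3)⁻¹ * q)) := by rw [hq]; ring
      _ ≤ _ := mul_le_mul_of_nonneg_left
        (mul_le_mul_of_nonneg_right (by linarith) (by positivity)) (by positivity)
  have u2 : 3 * ((72 * jap w ^ 3 * (jap v ^ 3)⁻¹ * (1 + sing 2 (v - w))) * (|F v| * (K * PP G v)))
      ≤ 216 * K ^ 2 * jap w ^ 3 * ((2 + sing 1 (v - w)) * ((jap v ^ 3)⁻¹ * q))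
        + 216 * K ^ 2 * jap w ^ 3 * (sing 2 (v - w) * ((jap v ^ 3)⁻¹ * r)) := by
    calc _ = 216 * K * jap w ^ 3 * (1 * ((jap v ^ 3)⁻¹ * r))
          + 216 * K * jap w ^ 3 * (sing 2 (v - w) * ((jap v ^ 3)⁻¹ * r)) := by rw [hr]; ring
      _ ≤ _ := by gcongr; linarith
  have u3 : 8 * jap w ^ 3 * (RR k f v * |G v|) ≤ 8 * K ^ 2 * jap w ^ 3 * (RR k f v * |G v|) := by
    have : (8 : ℝ) ≤ 8 * K ^ 2 := by linarith
    gcongr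
  have u4 : 48 * jap w ^ 3 * (jap v ^ 3)⁻¹ * q
      ≤ 48 * K ^ 2 * jap w ^ 3 * ((2 + sing 1 (v - w)) * ((jap v ^ 3)⁻¹ * q)) := by
    calc _ = 48 * 1 * jap w ^ 3 * (1 * ((jap v ^ 3)⁻¹ * q)) := by ring
      _ ≤ _ := by gcongr <;> linarith
  have p1 : 0 ≤ K ^ 2 * jap w ^ 3 * ((2 + sing 1 (v - w)) * ((jap v ^ 3)⁻¹ * q)) := by positivity
  have p2 : 0 ≤ K ^ 2 * jap w ^ 3 * (sing 2 (v - w) * ((jap v ^ 3)⁻¹ * r)) := by positivity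
  have p3 : 0 ≤ K ^ 2 * jap w ^ 3 * (RR k f v * |G v|) := by positivity
  linarith

/-! ### The Hardy inequality -/

/-- The components of the vector field `z / (ε + |z|²)`. -/
noncomputable def hK (ε : ℝ) (i : Fin 3) (z : E3) : ℝ := z i * rho ε z ^ 2

lemma pd_hK {ε : ℝ} (hε : 0 < ε) (i : Fin 3) (z : E3) :
    pd i (hK ε i) z = rho ε z ^ 2 - 2 * z i ^ 2 * rho ε z ^ 4 := by
  have hr := differentiable_rho hε
  unfold hK
  rw [pd_mul i (differentiable_coord i z) ((hr z).fun_pow 2), pd_coord, pd_rho_pow hε]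
  simp
  ring

lemma bddD_hK {ε : ℝ} (hε : 0 < ε) (i : Fin 3) : BddD i (hK ε i) := by
  have hr := differentiable_rho hε
  refine ⟨?_, (Real.sqrt ε)⁻¹ + 3 * ((Real.sqrt ε)⁻¹) ^ 2, fun z => ?_⟩
  · unfold hK
    exact (differentiable_coord i).mul (hr.pow 2)
  rw [pd_hK hε]
  have h1 := coord_mul_rho_le hε z i
  have h3 := rho_le_eps hε z
  have h4 := rho_nonneg ε z
  have h5 : rho ε z ^ 2 ≤ ((Real.sqrt ε)⁻¹) ^ 2 := by gcongr
  have h6 : 0 ≤ (Real.sqrt ε)⁻¹ := by positivity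
  constructor
  · have e : hK ε i z = (z i * rho ε z) * rho ε z := by unfold hK; ring
    rw [e]
    have := abs_mul_le h1 (abs_of_nonneg h4).le
    nlinarith
  · have h7 : (z i * rho ε z) ^ 2 ≤ 1 := by rw [sq_le_one_iff_abs_le_one]; exact h1
    have e : rho ε z ^ 2 - 2 * z i ^ 2 * rho ε z ^ 4
        = rho ε z ^ 2 * (1 - 2 * (z i * rho ε z) ^ 2) := by ring
    have h8 : |1 - 2 * (z i * rho ε z) ^ 2| ≤ 1 := by
      rw [abs_le]
      constructor <;> nlinarith [sq_nonneg (z i * rho ε z)]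
    rw [e]
    have := abs_mul_le (abs_of_nonneg (sq_nonneg (rho ε z))).le h8
    nlinarith

lemma hardy_eps {ε : ℝ} (hε : 0 < ε) (u : 𝓢(E3, ℝ)) (w : E3) :
    Integrable (fun v => rho ε (v - w) ^ 2 * u v ^ 2) ∧
    ∫ v, rho ε (v - w) ^ 2 * u v ^ 2
      ≤ 4 * ∫ v, (pd 0 u v ^ 2 + pd 1 u v ^ 2 + pd 2 u v ^ 2) := by
  have hi := fun i => ((bddD_hK hε i).comp_sub_const w).ibp (mulS u u)
  have hu : ⇑(mulS u u) = fun v => u v * u v := funext (mulS_apply u u)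
  have hp : ∀ i v, pd i (mulS u u) v = 2 * (u v * pd i u v) := by
    intro i v
    rw [hu, pd_mul i u.differentiableAt u.differentiableAt]
    ring
  simp only [pd_comp_sub_const, pd_hK hε, hp, mulS_apply] at hi
  have hg : Integrable (fun v => pd 0 u v ^ 2 + pd 1 u v ^ 2 + pd 2 u v ^ 2) := by
    have h : ∀ i, Integrable (fun v => pd i u v ^ 2) := by
      intro i
      have := (mulS (pdS i u) (pdS i u)).integrable (μ := volume)
      refine this.congr (Filter.Eventually.of_forall fun v => ?_)
      simp only [mulS_apply, pdS_coe]
      ring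
    exact ((h 0).add (h 1)).add (h 2)
  have hr : Integrable (fun v => rho ε (v - w) ^ 2 * u v ^ 2) := by
    have h := (mulS u u).integrable (μ := volume)
    have hm : Measurable (fun v => rho ε (v - w) ^ 2) := by
      have := (differentiable_rho hε).continuous.measurable
      fun_prop
    have h2 := h.bdd_mul (c := ((Real.sqrt ε)⁻¹) ^ 2) hm.aestronglyMeasurable
      (Filter.Eventually.of_forall fun v => by
        have h3 := rho_le_eps hε (v - w)
        have h4 := rho_nonneg ε (v - w)
        rw [Real.norm_of_nonneg (by positivity)]
        gcongr)
    refine h2.congr (Filter.Eventually.of_forall fun v => ?_)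
    simp only [mulS_apply]
    ring
  refine ⟨hr, ?_⟩
  have k1 : ∫ v, rho ε (v - w) ^ 2 * u v ^ 2 ≤ ∫ v,
      ((rho ε (v - w) ^ 2 - 2 * (v - w) 0 ^ 2 * rho ε (v - w) ^ 4) * (u v * u v)
      + (rho ε (v - w) ^ 2 - 2 * (v - w) 1 ^ 2 * rho ε (v - w) ^ 4) * (u v * u v)
      + (rho ε (v - w) ^ 2 - 2 * (v - w) 2 ^ 2 * rho ε (v - w) ^ 4) * (u v * u v)) := by
    refine integral_mono hr (((hi 0).2.1.add (hi 1).2.1).add (hi 2).2.1) fun v => ?_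
    have e := rho_sq hε (v - w)
    have e2 := norm_sq_coord (v - w)
    have h1 := eps_mul_rho_sq_le hε (v - w)
    have h2 : 0 ≤ (ε * rho ε (v - w) ^ 2) * rho ε (v - w) ^ 2 * u v ^ 2 := by positivity
    simp only
    rw [e2] at e
    have h3 : ((v - w) 0 ^ 2 + (v - w) 1 ^ 2 + (v - w) 2 ^ 2) * rho ε (v - w) ^ 2
        = 1 - ε * rho ε (v - w) ^ 2 := by linarith
    have h4 : (rho ε (v - w) ^ 2 - 2 * (v - w) 0 ^ 2 * rho ε (v - w) ^ 4) * (u v * u v)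
      + (rho ε (v - w) ^ 2 - 2 * (v - w) 1 ^ 2 * rho ε (v - w) ^ 4) * (u v * u v)
      + (rho ε (v - w) ^ 2 - 2 * (v - w) 2 ^ 2 * rho ε (v - w) ^ 4) * (u v * u v)
      = rho ε (v - w) ^ 2 * u v ^ 2 + 2 * ((ε * rho ε (v - w) ^ 2) * rho ε (v - w) ^ 2 * u v ^ 2) := by
      linear_combination (-2 * rho ε (v - w) ^ 2 * u v ^ 2) * h3
    rw [h4]
    linarith
  have k2 : ∫ v,
      ((rho ε (v - w) ^ 2 - 2 * (v - w) 0 ^ 2 * rho ε (v - w) ^ 4) * (u v * u v)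
      + (rho ε (v - w) ^ 2 - 2 * (v - w) 1 ^ 2 * rho ε (v - w) ^ 4) * (u v * u v)
      + (rho ε (v - w) ^ 2 - 2 * (v - w) 2 ^ 2 * rho ε (v - w) ^ 4) * (u v * u v))
      = - ∫ v, (hK ε 0 (v - w) * (2 * (u v * pd 0 u v)) + hK ε 1 (v - w) * (2 * (u v * pd 1 u v))
        + hK ε 2 (v - w) * (2 * (u v * pd 2 u v))) := by
    have i01 : Integrable fun v =>
      (rho ε (v - w) ^ 2 - 2 * (v - w) 0 ^ 2 * rho ε (v - w) ^ 4) * (u v * u v)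
      + (rho ε (v - w) ^ 2 - 2 * (v - w) 1 ^ 2 * rho ε (v - w) ^ 4) * (u v * u v) :=
      (hi 0).2.1.add (hi 1).2.1
    have j01 : Integrable fun v =>
      hK ε 0 (v - w) * (2 * (u v * pd 0 u v)) + hK ε 1 (v - w) * (2 * (u v * pd 1 u v)) :=
      (hi 0).1.add (hi 1).1
    rw [integral_add i01 (hi 2).2.1, integral_add (hi 0).2.1 (hi 1).2.1,
      integral_add j01 (hi 2).1, integral_add (hi 0).1 (hi 1).1, (hi 0).2.2, (hi 1).2.2, (hi 2).2.2]
    ring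
  have k3 : - ∫ v, (hK ε 0 (v - w) * (2 * (u v * pd 0 u v)) + hK ε 1 (v - w) * (2 * (u v * pd 1 u v))
        + hK ε 2 (v - w) * (2 * (u v * pd 2 u v)))
      ≤ ∫ v, (1 / 2 * (rho ε (v - w) ^ 2 * u v ^ 2)
        + 2 * (pd 0 u v ^ 2 + pd 1 u v ^ 2 + pd 2 u v ^ 2)) := by
    rw [← integral_neg]
    refine integral_mono (((hi 0).1.add (hi 1).1).add (hi 2).1).neg
      ((hr.const_mul (1 / 2)).add (hg.const_mul 2)) fun v => ?_
    simp only [hK]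
    have e := rho_sq hε (v - w)
    have e2 := norm_sq_coord (v - w)
    rw [e2] at e
    have h2 : 0 ≤ (ε * rho ε (v - w) ^ 2) * rho ε (v - w) ^ 2 * u v ^ 2 := by positivity
    have h3 : ((v - w) 0 ^ 2 + (v - w) 1 ^ 2 + (v - w) 2 ^ 2) * rho ε (v - w) ^ 2
        = 1 - ε * rho ε (v - w) ^ 2 := by linarith
    have h5 : 1 / 2 * (rho ε (v - w) ^ 2 * u v ^ 2) = 1 / 2 * (ε * rho ε (v - w) ^ 2) *
      rho ε (v - w) ^ 2 * u v ^ 2 + 1 / 2 * (((v - w) 0 * rho ε (v - w) ^ 2 * u v) ^ 2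
        + ((v - w) 1 * rho ε (v - w) ^ 2 * u v) ^ 2
        + ((v - w) 2 * rho ε (v - w) ^ 2 * u v) ^ 2) := by
      linear_combination (-1 / 2 * rho ε (v - w) ^ 2 * u v ^ 2) * h3
    rw [h5]
    nlinarith [sq_nonneg ((v - w) 0 * rho ε (v - w) ^ 2 * u v + 2 * pd 0 u v),
      sq_nonneg ((v - w) 1 * rho ε (v - w) ^ 2 * u v + 2 * pd 1 u v),
      sq_nonneg ((v - w) 2 * rho ε (v - w) ^ 2 * u v + 2 * pd 2 u v)]
  rw [integral_add (hr.const_mul (1 / 2)) (hg.const_mul 2), integral_const_mul,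
    integral_const_mul] at k3
  linarith

open Filter in
/-- The Hardy inequality `∫ u² / |v - w|² ≤ 4 ∫ |∇u|²`, restricted to the unit ball around `w`. -/
lemma hardy (u : 𝓢(E3, ℝ)) (w : E3) :
    ∫⁻ v, ENNReal.ofReal (sing 2 (v - w) * u v ^ 2)
      ≤ ENNReal.ofReal (4 * ∫ v, (pd 0 u v ^ 2 + pd 1 u v ^ 2 + pd 2 u v ^ 2)) := by
  set e : ℕ → ℝ := fun n => 1 / ((n : ℝ) + 1) with he
  have he0 : ∀ n, 0 < e n := fun n => by simp only [he]; positivity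
  have hlim : Tendsto e atTop (nhds 0) := tendsto_one_div_add_atTop_nhds_zero_nat
  have h1 : ∀ v, v - w ≠ 0 → ENNReal.ofReal (sing 2 (v - w) * u v ^ 2)
      ≤ liminf (fun n => ENNReal.ofReal (rho (e n) (v - w) ^ 2 * u v ^ 2)) atTop := by
    intro v hv
    have hp : 0 < ‖v - w‖ := norm_pos_iff.2 hv
    have ht : Tendsto (fun n => ENNReal.ofReal (rho (e n) (v - w) ^ 2 * u v ^ 2)) atTop
        (nhds (ENNReal.ofReal ((‖v - w‖⁻¹) ^ 2 * u v ^ 2))) := by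
      refine (ENNReal.continuous_ofReal.tendsto _).comp ?_
      refine Tendsto.mul_const _ (Tendsto.pow ?_ 2)
      unfold rho
      have hc : Tendsto (fun n => Real.sqrt (e n + ‖v - w‖ ^ 2)) atTop
          (nhds (Real.sqrt (0 + ‖v - w‖ ^ 2))) := (hlim.add_const _).sqrt
      rw [zero_add, Real.sqrt_sq hp.le] at hc
      exact hc.inv₀ hp.ne'
    rw [ht.liminf_eq]
    refine ENNReal.ofReal_le_ofReal (mul_le_mul_of_nonneg_right ?_ (sq_nonneg _))
    unfold sing
    split_ifs
    · exact le_rfl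
    · positivity
  have hae : ∀ᵐ v : E3, v - w ≠ 0 := by
    filter_upwards [ae_ne_sub w] with v hv hc
    exact hv (by rw [← neg_sub, hc, neg_zero])
  calc ∫⁻ v, ENNReal.ofReal (sing 2 (v - w) * u v ^ 2)
      ≤ ∫⁻ v, liminf (fun n => ENNReal.ofReal (rho (e n) (v - w) ^ 2 * u v ^ 2)) atTop := by
        refine lintegral_mono_ae ?_
        filter_upwards [hae] with v hv
        exact h1 v hv
    _ ≤ liminf (fun n => ∫⁻ v, ENNReal.ofReal (rho (e n) (v - w) ^ 2 * u v ^ 2)) atTop := by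
        refine lintegral_liminf_le fun n => ?_
        have := (differentiable_rho (he0 n)).continuous.measurable
        have := u.continuous.measurable
        fun_prop
    _ ≤ liminf (fun _ : ℕ =>
        ENNReal.ofReal (4 * ∫ v, (pd 0 u v ^ 2 + pd 1 u v ^ 2 + pd 2 u v ^ 2))) atTop := by
        refine liminf_le_liminf (Eventually.of_forall fun n => ?_)
        have h := hardy_eps (he0 n) u w
        rw [← ofReal_integral_eq_lintegral_ofReal h.1
          (Eventually.of_forall fun v => by positivity)]
        exact ENNReal.ofReal_le_ofReal h.2
    _ = _ := by simp

/-! ### The bilinear integral estimate -/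

/-- The `L²` norm of an `ℝ≥0∞`-valued function. -/
noncomputable def nn (φ : E3 → ℝ≥0∞) : ℝ≥0∞ := (∫⁻ v, φ v ^ 2) ^ (1 / 2 : ℝ)

lemma nn_sq (φ : E3 → ℝ≥0∞) : nn φ ^ 2 = ∫⁻ v, φ v ^ 2 := by
  unfold nn
  rw [← ENNReal.rpow_natCast, ← ENNReal.rpow_mul]
  norm_num

lemma lintegral_mul_le_nn {φ ψ : E3 → ℝ≥0∞} (hφ : Measurable φ) (hψ : Measurable ψ) :
    ∫⁻ v, φ v * ψ v ≤ nn φ * nn ψ := by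
  have h := ENNReal.lintegral_mul_le_Lp_mul_Lq (volume : Measure E3)
    (Real.HolderConjugate.two_two) hφ.aemeasurable hψ.aemeasurable
  have e : ∀ x : ℝ≥0∞, x ^ (2 : ℝ) = x ^ 2 := fun x => by
    rw [← ENNReal.rpow_natCast]; norm_num
  simp only [e, Pi.mul_apply] at h
  exact h

lemma nn_le_of_sq {φ : E3 → ℝ≥0∞} {A : ℝ≥0∞} (h : ∫⁻ v, φ v ^ 2 ≤ A ^ 2) : nn φ ≤ A := by
  unfold nn
  refine (ENNReal.rpow_le_rpow h (by norm_num)).trans (le_of_eq ?_)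
  rw [← ENNReal.rpow_natCast, ← ENNReal.rpow_mul]
  norm_num

/-- The integral over pairs `(v, w)` controlling the weak form. The kernels `1 + |v - w|⁻¹` only
need the Cauchy-Schwarz inequality in `w`; for `|v - w|⁻²` one factor `|v - w|⁻¹` is absorbed by
`u`, uniformly in `w` (hypothesis `hu`), and the other one is square integrable. -/
lemma bilinear_bound {S γ p q u r s : E3 → ℝ≥0∞} (hS : Measurable S) (hγ : Measurable γ)
    (hp : Measurable p) (hq : Measurable q) (hu' : Measurable u) (hr : Measurable r)
    (hs : Measurable s) (A : ℝ≥0∞) (hu : ∀ w, ∫⁻ v, (S (v - w) * u v) ^ 2 ≤ A ^ 2) :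
    ∫⁻ w, ∫⁻ v, γ w * ((2 + S (v - w)) * (p v * q v) + S (v - w) ^ 2 * (u v * q v) + r v * s v)
      ≤ (2 * (∫⁻ w, γ w) + nn γ * nn S) * (nn p * nn q) + nn γ * A * (nn S * nn q)
        + (∫⁻ w, γ w) * (nn r * nn s) := by
  have hS2 : Measurable (fun x : E3 × E3 => S (x.2 - x.1)) := by fun_prop
  have hS1 : ∀ w, Measurable (fun v => S (v - w)) := fun w => by fun_prop
  have t1 : ∫⁻ w, ∫⁻ v, γ w * (2 * (p v * q v)) ≤ 2 * (∫⁻ w, γ w) * (nn p * nn q) := by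
    have e : ∀ w, ∫⁻ v, γ w * (2 * (p v * q v)) = γ w * (2 * ∫⁻ v, p v * q v) := by
      intro w
      rw [lintegral_const_mul _ (by fun_prop), lintegral_const_mul _ (by fun_prop)]
    simp only [e]
    rw [lintegral_mul_const _ hγ]
    calc (∫⁻ w, γ w) * (2 * ∫⁻ v, p v * q v) = 2 * (∫⁻ w, γ w) * ∫⁻ v, p v * q v := by ring
      _ ≤ _ := by gcongr; exact lintegral_mul_le_nn hp hq
  have t2 : ∫⁻ w, ∫⁻ v, γ w * (S (v - w) * (p v * q v)) ≤ nn γ * nn S * (nn p * nn q) := by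
    rw [lintegral_lintegral_swap (by fun_prop)]
    have e : ∀ v, ∫⁻ w, γ w * (S (v - w) * (p v * q v)) ≤ (nn γ * nn S) * (p v * q v) := by
      intro v
      have e1 : nn (fun w => S (v - w)) = nn S := by
        unfold nn
        rw [lintegral_sub_left_eq_self (fun w => S w ^ 2) v]
      calc ∫⁻ w, γ w * (S (v - w) * (p v * q v))
          = ∫⁻ w, (γ w * S (v - w)) * (p v * q v) := by simp only [mul_assoc]
        _ = (∫⁻ w, γ w * S (v - w)) * (p v * q v) := lintegral_mul_const _ (by fun_prop)
        _ ≤ _ := by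
          gcongr
          rw [← e1]
          exact lintegral_mul_le_nn hγ (by fun_prop)
    refine (lintegral_mono e).trans ?_
    rw [lintegral_const_mul _ (by fun_prop)]
    gcongr
    exact lintegral_mul_le_nn hp hq
  have t3 : ∫⁻ w, ∫⁻ v, γ w * (S (v - w) ^ 2 * (u v * q v)) ≤ nn γ * A * (nn S * nn q) := by
    have hm : Measurable (fun w => nn (fun v => S (v - w) * q v)) := by
      unfold nn
      refine Measurable.pow_const ?_ _
      exact Measurable.lintegral_prod_right' (f := fun x : E3 × E3 => (S (x.2 - x.1) * q x.2) ^ 2)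
        (by fun_prop)
    have e : ∀ w, ∫⁻ v, γ w * (S (v - w) ^ 2 * (u v * q v))
        ≤ A * (γ w * nn (fun v => S (v - w) * q v)) := by
      intro w
      rw [lintegral_const_mul _ (by fun_prop)]
      calc γ w * ∫⁻ v, S (v - w) ^ 2 * (u v * q v)
          = γ w * ∫⁻ v, (S (v - w) * u v) * (S (v - w) * q v) := by
            congr 1; refine lintegral_congr fun v => ?_; ring
        _ ≤ γ w * (A * nn (fun v => S (v - w) * q v)) := by
            gcongr
            refine (lintegral_mul_le_nn (by fun_prop) (by fun_prop)).trans ?_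
            gcongr
            exact nn_le_of_sq (hu w)
        _ = _ := by ring
    refine (lintegral_mono e).trans ?_
    rw [lintegral_const_mul _ (by fun_prop)]
    have e2 : nn (fun w => nn (fun v => S (v - w) * q v)) ≤ nn S * nn q := by
      refine nn_le_of_sq ?_
      simp only [nn_sq, mul_pow]
      rw [lintegral_lintegral_swap (by fun_prop)]
      have e3 : ∀ v, ∫⁻ w, S (v - w) ^ 2 * q v ^ 2 = (∫⁻ w, S w ^ 2) * q v ^ 2 := by
        intro v
        rw [lintegral_mul_const _ (by fun_prop), lintegral_sub_left_eq_self (fun w => S w ^ 2) v]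
      simp only [e3]
      rw [lintegral_const_mul _ (by fun_prop)]
    calc A * ∫⁻ w, γ w * nn (fun v => S (v - w) * q v)
        ≤ A * (nn γ * (nn S * nn q)) := by
          gcongr
          exact (lintegral_mul_le_nn hγ hm).trans (by gcongr)
      _ = _ := by ring
  have t4 : ∫⁻ w, ∫⁻ v, γ w * (r v * s v) ≤ (∫⁻ w, γ w) * (nn r * nn s) := by
    have e : ∀ w, ∫⁻ v, γ w * (r v * s v) = γ w * ∫⁻ v, r v * s v := by
      intro w
      rw [lintegral_const_mul _ (by fun_prop)]
    simp only [e]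
    rw [lintegral_mul_const _ hγ]
    gcongr
    exact lintegral_mul_le_nn hr hs
  have hsplit : ∫⁻ w, ∫⁻ v, γ w * ((2 + S (v - w)) * (p v * q v)
      + S (v - w) ^ 2 * (u v * q v) + r v * s v)
      = (∫⁻ w, ∫⁻ v, γ w * (2 * (p v * q v))) + (∫⁻ w, ∫⁻ v, γ w * (S (v - w) * (p v * q v)))
        + (∫⁻ w, ∫⁻ v, γ w * (S (v - w) ^ 2 * (u v * q v))) + ∫⁻ w, ∫⁻ v, γ w * (r v * s v) := by
    have m1 : Measurable (fun w => ∫⁻ v, γ w * (2 * (p v * q v))) :=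
      Measurable.lintegral_prod_right' (f := fun x : E3 × E3 => γ x.1 * (2 * (p x.2 * q x.2)))
        (by fun_prop)
    have m2 : Measurable (fun w => ∫⁻ v, γ w * (S (v - w) * (p v * q v))) :=
      Measurable.lintegral_prod_right'
        (f := fun x : E3 × E3 => γ x.1 * (S (x.2 - x.1) * (p x.2 * q x.2))) (by fun_prop)
    have m3 : Measurable (fun w => ∫⁻ v, γ w * (S (v - w) ^ 2 * (u v * q v))) :=
      Measurable.lintegral_prod_right'
        (f := fun x : E3 × E3 => γ x.1 * (S (x.2 - x.1) ^ 2 * (u x.2 * q x.2))) (by fun_prop)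
    have m12 : Measurable (fun w => (∫⁻ v, γ w * (2 * (p v * q v)))
        + ∫⁻ v, γ w * (S (v - w) * (p v * q v))) := m1.add m2
    have m123 : Measurable (fun w => (∫⁻ v, γ w * (2 * (p v * q v)))
        + (∫⁻ v, γ w * (S (v - w) * (p v * q v)))
        + ∫⁻ v, γ w * (S (v - w) ^ 2 * (u v * q v))) := m12.add m3
    rw [← lintegral_add_left m1, ← lintegral_add_left m12, ← lintegral_add_left m123]
    refine lintegral_congr fun w => ?_
    rw [← lintegral_add_left (by fun_prop), ← lintegral_add_left (by fun_prop),
      ← lintegral_add_left (by fun_prop)]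
    refine lintegral_congr fun v => ?_
    ring
  rw [hsplit, add_mul]
  gcongr

/-! ### The norms of the statement as integrals -/

lemma Lpl_sq (l : ℝ) (φ : E3 → ℝ) : (Lpl 2 l φ) ^ 2 = ∫ v, (jap v ^ l * φ v) ^ 2 := by
  unfold Lpl
  have e : ∀ v, |φ v| ^ (2 : ℝ) * jap v ^ (l * 2) = (jap v ^ l * φ v) ^ 2 := by
    intro v
    rw [Real.rpow_mul (jap_pos v).le, Real.rpow_two, Real.rpow_two, sq_abs]
    ring
  simp only [e]
  rw [← Real.sqrt_eq_rpow, Real.sq_sqrt (integral_nonneg fun v => by positivity)]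

lemma Lpl_nonneg (l : ℝ) (φ : E3 → ℝ) : 0 ≤ Lpl 2 l φ := by
  unfold Lpl
  refine Real.rpow_nonneg (integral_nonneg fun v => ?_) _
  have := jap_pos v
  positivity

lemma integrable_weight_sq (l : ℝ) (φ : 𝓢(E3, ℝ)) :
    Integrable (fun v => (jap v ^ l * φ v) ^ 2) := by
  refine ((mulS (wS l φ) (wS l φ)).integrable (μ := volume)).congr
    (Filter.Eventually.of_forall fun v => ?_)
  simp only [mulS_apply, wS_apply]
  ring

lemma HSobSq_one (l : ℝ) (f : E3 → ℝ) : HSobSq 1 l f = (Lpl 2 l f) ^ 2 + (Lpl 2 l (pd 0 f)) ^ 2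
    + (Lpl 2 l (pd 1 f)) ^ 2 + (Lpl 2 l (pd 2 f)) ^ 2 := by
  have h : multiIdx 1 = {![0, 0, 0], ![1, 0, 0], ![0, 1, 0], ![0, 0, 1]} := by
    unfold multiIdx
    decide
  unfold HSobSq
  rw [h, Finset.sum_insert (by decide), Finset.sum_insert (by decide),
    Finset.sum_insert (by decide), Finset.sum_singleton]
  simp [pdM, pdPow]
  ring

lemma HSobSq_nonneg (l : ℝ) (f : E3 → ℝ) : 0 ≤ HSobSq 1 l f := by
  rw [HSobSq_one]; positivity

lemma HAsq_eq (f : E3 → ℝ) : HAsq f = (Lpl 2 (-(3/2)) (rotD 0 1 f)) ^ 2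
    + (Lpl 2 (-(3/2)) (rotD 0 2 f)) ^ 2 + (Lpl 2 (-(3/2)) (rotD 1 2 f)) ^ 2
    + HSobSq 1 (-(3/2)) f := by
  have h : Finset.univ.filter (fun p : Fin 3 × Fin 3 => p.1 < p.2) = {(0, 1), (0, 2), (1, 2)} := by
    decide
  unfold HAsq
  rw [h, Finset.sum_insert (by decide), Finset.sum_insert (by decide), Finset.sum_singleton]
  ring

lemma HAsq_nonneg (f : E3 → ℝ) : 0 ≤ HAsq f := by
  rw [HAsq_eq, HSobSq_one]; positivity

/-- `(v_i ∂_j - v_j ∂_i) f` as a Schwartz function. -/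
noncomputable def rotS (i j : Fin 3) (f : 𝓢(E3, ℝ)) : 𝓢(E3, ℝ) :=
  SchwartzMap.smulLeftCLM ℝ (fun v : E3 => v i) (pdS j f)
    - SchwartzMap.smulLeftCLM ℝ (fun v : E3 => v j) (pdS i f)

lemma coord_tg (i : Fin 3) : (fun v : E3 => v i).HasTemperateGrowth :=
  (EuclideanSpace.proj i : E3 →L[ℝ] ℝ).hasTemperateGrowth

lemma rotS_coe (i j : Fin 3) (f : 𝓢(E3, ℝ)) : ⇑(rotS i j f) = rotD i j ⇑f := by
  ext v
  unfold rotS rotD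
  rw [sub_apply, SchwartzMap.smulLeftCLM_apply_apply (coord_tg i),
    SchwartzMap.smulLeftCLM_apply_apply (coord_tg j), pdS_coe, pdS_coe]
  rfl

lemma nn_le {p B : E3 → ℝ} {M : ℝ} (hp : ∀ v, 0 ≤ p v) (hB : Integrable B)
    (hpB : ∀ v, p v ^ 2 ≤ B v) (hM : 0 ≤ M) (hBM : ∫ v, B v ≤ M ^ 2) :
    nn (fun v => ENNReal.ofReal (p v)) ≤ ENNReal.ofReal M := by
  refine nn_le_of_sq ?_
  calc ∫⁻ v, ENNReal.ofReal (p v) ^ 2 ≤ ∫⁻ v, ENNReal.ofReal (B v) := by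
        refine lintegral_mono fun v => ?_
        rw [← ENNReal.ofReal_pow (hp v)]
        exact ENNReal.ofReal_le_ofReal (hpB v)
    _ = ENNReal.ofReal (∫ v, B v) := by
        rw [ofReal_integral_eq_lintegral_ofReal hB
          (Filter.Eventually.of_forall fun v => (sq_nonneg _).trans (hpB v))]
    _ ≤ ENNReal.ofReal M ^ 2 := by
        rw [← ENNReal.ofReal_pow hM]
        exact ENNReal.ofReal_le_ofReal hBM

/-- The integrand whose integral is `‖F‖²_{𝖧¹_A}`. -/
noncomputable def hDens (F : E3 → ℝ) (v : E3) : ℝ :=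
  (jap v ^ (-(3/2) : ℝ) * rotD 0 1 F v) ^ 2 + (jap v ^ (-(3/2) : ℝ) * rotD 0 2 F v) ^ 2
    + (jap v ^ (-(3/2) : ℝ) * rotD 1 2 F v) ^ 2 + (jap v ^ (-(3/2) : ℝ) * F v) ^ 2
    + (jap v ^ (-(3/2) : ℝ) * pd 0 F v) ^ 2 + (jap v ^ (-(3/2) : ℝ) * pd 1 F v) ^ 2
    + (jap v ^ (-(3/2) : ℝ) * pd 2 F v) ^ 2

lemma hDens_integral (F : 𝓢(E3, ℝ)) : Integrable (hDens F) ∧ ∫ v, hDens F v = HAsq F := by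
  have hr : ∀ i j, Integrable (fun v => (jap v ^ (-(3/2) : ℝ) * rotD i j F v) ^ 2) := fun i j => by
    simpa only [rotS_coe] using integrable_weight_sq (-(3/2)) (rotS i j F)
  have hd : ∀ i, Integrable (fun v => (jap v ^ (-(3/2) : ℝ) * pd i F v) ^ 2) := fun i => by
    simpa only [pdS_coe] using integrable_weight_sq (-(3/2)) (pdS i F)
  have h0 := integrable_weight_sq (-(3/2)) F
  have h1 := (hr 0 1).add (hr 0 2)
  have h2 := h1.add (hr 1 2)
  have h3 := h2.add h0
  have h4 := h3.add (hd 0)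
  have h5 := h4.add (hd 1)
  have h6 := h5.add (hd 2)
  refine ⟨h6, ?_⟩
  rw [HAsq_eq, HSobSq_one]
  simp only [Lpl_sq]
  have e := integral_add' h5 (hd 2)
  rw [integral_add' h4 (hd 1), integral_add' h3 (hd 0), integral_add' h2 h0,
    integral_add' h1 (hr 1 2), integral_add' (hr 0 1) (hr 0 2)] at e
  refine Eq.trans e ?_
  ring

lemma HA_sq (F : E3 → ℝ) : HA F ^ 2 = HAsq F := Real.sq_sqrt (HAsq_nonneg F)

lemma nn_PP (F : 𝓢(E3, ℝ)) :
    nn (fun v => ENNReal.ofReal (jap v ^ (-(3/2) : ℝ) * PP F v)) ≤ ENNReal.ofReal (3 * HA F) := by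
  have h := hDens_integral F
  refine nn_le (B := fun v => 7 * hDens F v) (fun v => ?_) (h.1.const_mul 7) (fun v => ?_)
    (mul_nonneg (by norm_num) (Real.sqrt_nonneg _)) ?_
  · exact mul_nonneg (Real.rpow_nonneg (jap_pos v).le _) (PP_nonneg _ _)
  · have hJ : 0 ≤ jap v ^ (-(3/2) : ℝ) := Real.rpow_nonneg (jap_pos v).le _
    simp only [hDens]
    simp only [mul_pow, ← mul_add]
    rw [mul_left_comm]
    refine mul_le_mul_of_nonneg_left ?_ (sq_nonneg _)
    unfold PP
    rw [← sq_abs (rotD 0 1 F v), ← sq_abs (rotD 0 2 F v), ← sq_abs (rotD 1 2 F v), ← sq_abs (F v),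
      ← sq_abs (pd 0 F v), ← sq_abs (pd 1 F v), ← sq_abs (pd 2 F v)]
    have := sq_sum_le_card_mul_sum_sq (s := (Finset.univ : Finset (Fin 7)))
      (f := ![|F v|, |pd 0 F v|, |pd 1 F v|, |pd 2 F v|, |rotD 0 1 F v|, |rotD 0 2 F v|,
        |rotD 1 2 F v|])
    simp [Fin.sum_univ_succ] at this
    simp only [sq_abs]
    refine le_trans (le_of_eq ?_) (this.trans (le_of_eq ?_)) <;> ring
  · rw [integral_const_mul, h.2, mul_pow, HA_sq]
    nlinarith [HAsq_nonneg F]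

/-- The Hardy inequality for `⟨v⟩^{-3/2} F`, with the right-hand side measured in `𝖧¹_A`. -/
lemma hardy_HA (F : 𝓢(E3, ℝ)) (w : E3) :
    ∫⁻ v, (ENNReal.ofReal (sing 1 (v - w)) * ENNReal.ofReal (jap v ^ (-(3/2) : ℝ) * |F v|)) ^ 2
      ≤ ENNReal.ofReal (8 * HA F) ^ 2 := by
  have h := hDens_integral F
  have e : ∀ v, (ENNReal.ofReal (sing 1 (v - w)) *
      ENNReal.ofReal (jap v ^ (-(3/2) : ℝ) * |F v|)) ^ 2
      = ENNReal.ofReal (sing 2 (v - w) * (wS (-(3/2)) F) v ^ 2) := by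
    intro v
    rw [← ENNReal.ofReal_mul (sing_nonneg _ _), ← ENNReal.ofReal_pow (mul_nonneg (sing_nonneg _ _)
      (mul_nonneg (Real.rpow_nonneg (jap_pos v).le _) (abs_nonneg _)))]
    congr 1
    rw [mul_pow, mul_pow, sq_abs, wS_apply, mul_pow]
    congr 1
    unfold sing
    split_ifs <;> simp
  simp only [e]
  refine (hardy (wS (-(3/2)) F) w).trans ?_
  have h8 : 0 ≤ 8 * HA F := mul_nonneg (by norm_num) (Real.sqrt_nonneg _)
  rw [← ENNReal.ofReal_pow h8]
  refine ENNReal.ofReal_le_ofReal ?_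
  have hd : ∀ i, Integrable (fun v => (pd i (wS (-(3/2)) F) v) ^ 2) := fun i => by
    have := integrable_weight_sq 0 (pdS i (wS (-(3/2)) F))
    simpa only [pdS_coe, Real.rpow_zero, one_mul] using this
  have k : ∫ v, (pd 0 (wS (-(3/2)) F) v ^ 2 + pd 1 (wS (-(3/2)) F) v ^ 2
      + pd 2 (wS (-(3/2)) F) v ^ 2) ≤ ∫ v, 16 * hDens F v := by
    refine integral_mono (((hd 0).add (hd 1)).add (hd 2)) (h.1.const_mul 16) fun v => ?_
    have hb : ∀ i, pd i (wS (-(3/2)) F) v ^ 2 ≤ 2 * (jap v ^ (-(3/2) : ℝ) * pd i F v) ^ 2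
        + 9 / 2 * (jap v ^ (-(3/2) : ℝ) * F v) ^ 2 := by
      intro i
      rw [pd_wS]
      have h1 := coord_jap_le v i
      rw [← sq_le_one_iff_abs_le_one] at h1
      set J := jap v ^ (-(3/2) : ℝ)
      set c := v i * jap v ^ (-2 : ℝ)
      have e1 : J * (pd i F v + -(3/2) * v i * jap v ^ (-2 : ℝ) * F v)
        = J * pd i F v - 3 / 2 * c * (J * F v) := by simp only [c]; ring
      rw [e1]
      have h2 : c ^ 2 * (J * F v) ^ 2 ≤ 1 * (J * F v) ^ 2 :=
        mul_le_mul_of_nonneg_right h1 (sq_nonneg _)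
      nlinarith [sq_nonneg (J * pd i F v + 3 / 2 * c * (J * F v))]
    have h0 := hb 0
    have h1 := hb 1
    have h2 := hb 2
    simp only [hDens]
    nlinarith [sq_nonneg (jap v ^ (-(3/2) : ℝ) * rotD 0 1 F v),
      sq_nonneg (jap v ^ (-(3/2) : ℝ) * rotD 0 2 F v),
      sq_nonneg (jap v ^ (-(3/2) : ℝ) * rotD 1 2 F v),
      sq_nonneg (jap v ^ (-(3/2) : ℝ) * F v),
      sq_nonneg (jap v ^ (-(3/2) : ℝ) * pd 0 F v),
      sq_nonneg (jap v ^ (-(3/2) : ℝ) * pd 1 F v),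
      sq_nonneg (jap v ^ (-(3/2) : ℝ) * pd 2 F v)]
  rw [integral_const_mul, h.2] at k
  rw [mul_pow, HA_sq]
  linarith

lemma nn_RR (k : ℝ) (f : 𝓢(E3, ℝ)) :
    nn (fun v => ENNReal.ofReal (RR k f v)) ≤ ENNReal.ofReal (2 * HSob 1 (k - 2) f) := by
  have hd : ∀ i, Integrable (fun v => (jap v ^ (k - 2) * pd i f v) ^ 2) := fun i => by
    simpa only [pdS_coe] using integrable_weight_sq (k - 2) (pdS i f)
  have h1 := (hd 0).add (hd 1)
  have h2 := h1.add (hd 2)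
  refine nn_le (B := fun v => 3 * ((jap v ^ (k - 2) * pd 0 f v) ^ 2
      + (jap v ^ (k - 2) * pd 1 f v) ^ 2 + (jap v ^ (k - 2) * pd 2 f v) ^ 2)) (fun v => ?_)
    (h2.const_mul 3) (fun v => ?_) (mul_nonneg (by norm_num) (Real.sqrt_nonneg _)) ?_
  · exact mul_nonneg (Real.rpow_nonneg (jap_pos v).le _) (by positivity)
  · simp only [RR, mul_pow, ← mul_add]
    rw [mul_left_comm]
    refine mul_le_mul_of_nonneg_left ?_ (sq_nonneg _)
    rw [← sq_abs (pd 0 f v), ← sq_abs (pd 1 f v), ← sq_abs (pd 2 f v)]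
    nlinarith [sq_nonneg (|pd 0 f v| - |pd 1 f v|), sq_nonneg (|pd 0 f v| - |pd 2 f v|),
      sq_nonneg (|pd 1 f v| - |pd 2 f v|)]
  · rw [integral_const_mul]
    have e := integral_add' h1 (hd 2)
    rw [integral_add' (hd 0) (hd 1)] at e
    have e' : ∫ v, ((jap v ^ (k - 2) * pd 0 f v) ^ 2
      + (jap v ^ (k - 2) * pd 1 f v) ^ 2 + (jap v ^ (k - 2) * pd 2 f v) ^ 2)
      = (Lpl 2 (k - 2) (pd 0 f)) ^ 2 + (Lpl 2 (k - 2) (pd 1 f)) ^ 2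
        + (Lpl 2 (k - 2) (pd 2 f)) ^ 2 := by
      simp only [Lpl_sq]
      exact e
    rw [e', mul_pow]
    have e2 : HSob 1 (k - 2) f ^ 2 = HSobSq 1 (k - 2) f := Real.sq_sqrt (HSobSq_nonneg _ _)
    rw [e2, HSobSq_one]
    nlinarith [sq_nonneg (Lpl 2 (k - 2) f), sq_nonneg (Lpl 2 (k - 2) (pd 0 f)),
      sq_nonneg (Lpl 2 (k - 2) (pd 1 f)), sq_nonneg (Lpl 2 (k - 2) (pd 2 f))]

lemma nn_weight {l k : ℝ} (hlk : l ≤ k) (h : 𝓢(E3, ℝ)) :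
    nn (fun v => ENNReal.ofReal (jap v ^ l * |h v|)) ≤ ENNReal.ofReal (Lpl 2 k h) := by
  refine nn_le (B := fun v => (jap v ^ k * h v) ^ 2) (fun v => ?_) (integrable_weight_sq k h)
    (fun v => ?_) (Lpl_nonneg _ _) (Lpl_sq k h).ge
  · exact mul_nonneg (Real.rpow_nonneg (jap_pos v).le _) (abs_nonneg _)
  · rw [mul_pow, mul_pow, sq_abs]
    have h1 := Real.rpow_le_rpow_of_exponent_le (one_le_jap v) hlk
    have h2 : 0 ≤ jap v ^ l := Real.rpow_nonneg (jap_pos v).le _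
    gcongr

/-- `‖⟨v⟩³ g‖_{L¹} ≤ C ‖g‖_{L²_k}`; the constant is finite because `2 (k - 3) > 3`. -/
lemma lintegral_weight {k : ℝ} (hk : 9 / 2 < k) : ∃ I : ℝ, 0 ≤ I ∧ ∀ g : 𝓢(E3, ℝ),
    ∫⁻ v, ENNReal.ofReal (jap v ^ (3 : ℝ) * |g v|) ≤ ENNReal.ofReal (I * Lpl 2 k g) := by
  have hi : Integrable (fun v : E3 => (jap v ^ (3 - k)) ^ 2) := by
    have h := integrable_rpow_neg_one_add_norm_sq (E := E3) (μ := volume) (r := 2 * (k - 3))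
      (by simp; linarith)
    refine h.congr (Filter.Eventually.of_forall fun v => ?_)
    simp only
    rw [← Real.rpow_natCast (jap v ^ (3 - k)), ← Real.rpow_mul (jap_pos v).le, jap_rpow_eq]
    congr 1
    push_cast
    ring
  refine ⟨Real.sqrt (∫ v : E3, (jap v ^ (3 - k)) ^ 2), Real.sqrt_nonneg _, fun g => ?_⟩
  have m := continuous_jap.measurable
  have mg := g.continuous.measurable
  rw [ENNReal.ofReal_mul (Real.sqrt_nonneg _)]
  have e : ∀ v, ENNReal.ofReal (jap v ^ (3 : ℝ) * |g v|)
      = ENNReal.ofReal (jap v ^ (3 - k)) * ENNReal.ofReal (jap v ^ k * |g v|) := by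
    intro v
    rw [← ENNReal.ofReal_mul (Real.rpow_nonneg (jap_pos v).le _), ← mul_assoc,
      ← Real.rpow_add (jap_pos v)]
    congr 3
    ring
  simp only [e]
  refine (lintegral_mul_le_nn (by fun_prop) (by fun_prop)).trans ?_
  refine mul_le_mul' ?_ (nn_weight le_rfl g)
  exact nn_le (fun v => Real.rpow_nonneg (jap_pos v).le _) hi (fun v => le_rfl)
    (Real.sqrt_nonneg _) (Real.sq_sqrt (integral_nonneg fun v => sq_nonneg _)).ge

/-! ### Conclusion -/

/-- The bound for the regularised weak form, uniform in the regularisation parameter. -/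
lemma weakT_bound {k : ℝ} (hk : 9 / 2 < k) : ∃ C > 0, ∀ ε : ℝ, 0 < ε → ε ≤ 1 →
    ∀ f g h : 𝓢(E3, ℝ), |weakT (aE ε) g f (wS (2 * k) h)|
      ≤ C * Lpl 2 k g * (HA (wS k f) * HA (wS k h) + HSob 1 (k - 2) f * Lpl 2 k h) := by
  obtain ⟨I, hI, hγ1⟩ := lintegral_weight hk
  set S0 : ℝ := Real.sqrt (∫ v : E3, sing 2 v) with hS0
  have hS0' : 0 ≤ S0 := Real.sqrt_nonneg _
  have hnS : nn (fun v => ENNReal.ofReal (sing 1 v)) ≤ ENNReal.ofReal S0 := by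
    refine nn_le (B := sing 2) (sing_nonneg 1) (integrable_sing le_rfl) (fun v => ?_) hS0'
      (Real.sq_sqrt (integral_nonneg fun v => sing_nonneg _ _)).ge
    unfold sing
    split_ifs <;> simp
  set K : ℝ := 1000 * (1 + |k|) ^ 2 with hK
  have hK0 : 0 < K := by positivity
  refine ⟨K * (20 * I + 33 * S0) + 1, by positivity, fun ε hε hε1 f g h => ?_⟩
  have mj := continuous_jap.measurable
  have mS := measurable_sing 1
  have mg := g.continuous.measurable
  have mp : ∀ (u : 𝓢(E3, ℝ)) (i : Fin 3), Measurable (pd i u) := fun u i => by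
    rw [← pdS_coe]; exact (pdS i u).continuous.measurable
  have mr : ∀ (u : 𝓢(E3, ℝ)) (i j : Fin 3), Measurable (rotD i j u) := fun u i j => by
    rw [← rotS_coe]; exact (rotS i j u).continuous.measurable
  have mu : ∀ (u : 𝓢(E3, ℝ)), Measurable u := fun u => u.continuous.measurable
  have mPP : ∀ (u : 𝓢(E3, ℝ)), Measurable (PP u) := fun u => by
    unfold PP
    have := mp u
    have := mr u
    have := mu u
    fun_prop
  have mRR : Measurable (RR k f) := by
    unfold RR
    have := mp f
    fun_prop
  have mF := mu (wS k f)
  have mPF := mPP (wS k f)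
  have mPG := mPP (wS k h)
  have mh := mu h
  have hb := bilinear_bound (S := fun v => ENNReal.ofReal (sing 1 v))
    (γ := fun v => ENNReal.ofReal (jap v ^ (3 : ℝ) * |g v|))
    (p := fun v => ENNReal.ofReal (jap v ^ (-(3/2) : ℝ) * PP (wS k f) v))
    (q := fun v => ENNReal.ofReal (jap v ^ (-(3/2) : ℝ) * PP (wS k h) v))
    (u := fun v => ENNReal.ofReal (jap v ^ (-(3/2) : ℝ) * |wS k f v|))
    (r := fun v => ENNReal.ofReal (RR k f v))
    (s := fun v => ENNReal.ofReal (jap v ^ k * |h v|))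
    (by fun_prop) (by fun_prop) (by fun_prop) (by fun_prop) (by fun_prop) (by fun_prop)
    (by fun_prop) (ENNReal.ofReal (8 * HA (wS k f))) (hardy_HA (wS k f))
  have hLg := Lpl_nonneg k g
  have hLh := Lpl_nonneg k h
  have hHF : 0 ≤ HA (wS k f) := Real.sqrt_nonneg _
  have hHG : 0 ≤ HA (wS k h) := Real.sqrt_nonneg _
  have hHS : 0 ≤ HSob 1 (k - 2) f := Real.sqrt_nonneg _
  set Lg := Lpl 2 k g
  set Lh := Lpl 2 k h
  set X := HA (wS k f)
  set Y := HA (wS k h)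
  set Z := HSob 1 (k - 2) f
  set M : ℝ := (2 * (I * Lg) + Lg * S0) * (3 * X * (3 * Y)) + Lg * (8 * X) * (S0 * (3 * Y))
    + I * Lg * (2 * Z * Lh) with hM
  have hM0 : 0 ≤ M := by positivity
  have hb2 := hb.trans (b := _) (c := ENNReal.ofReal M) (by
    rw [hM, ENNReal.ofReal_add (by positivity) (by positivity),
      ENNReal.ofReal_add (by positivity) (by positivity),
      ENNReal.ofReal_mul (p := 2 * (I * Lg) + Lg * S0) (by positivity),
      ENNReal.ofReal_add (by positivity) (by positivity),
      ENNReal.ofReal_mul (p := 2) (by positivity), ENNReal.ofReal_mul (p := Lg) (by positivity),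
      ENNReal.ofReal_mul (p := 3 * X) (by positivity),
      ENNReal.ofReal_mul (p := Lg * (8 * X)) (by positivity),
      ENNReal.ofReal_mul (p := Lg) (q := 8 * X) (by positivity),
      ENNReal.ofReal_mul (p := S0) (by positivity),
      ENNReal.ofReal_mul (p := I * Lg) (by positivity),
      ENNReal.ofReal_mul (p := 2 * Z) (by positivity), ENNReal.ofReal_ofNat]
    have n1 := hγ1 g
    have n2 : nn (fun v => ENNReal.ofReal (jap v ^ (3 : ℝ) * |g v|)) ≤ ENNReal.ofReal Lg :=
      nn_weight (by linarith) g
    have n3 := nn_PP (wS k f)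
    have n4 := nn_PP (wS k h)
    have n5 := nn_RR k f
    have n6 : nn (fun v => ENNReal.ofReal (jap v ^ k * |h v|)) ≤ ENNReal.ofReal Lh :=
      nn_weight le_rfl h
    gcongr)
  have hfin : |weakT (aE ε) g f (wS (2 * k) h)| ≤ K * M := by
    rw [weakT_eq hε, ← Real.norm_eq_abs, ← ENNReal.ofReal_le_ofReal_iff (by positivity),
      ofReal_norm]
    refine (enorm_integral_le_lintegral_enorm _).trans ?_
    rw [ENNReal.ofReal_mul hK0.le]
    rw [Measure.volume_eq_prod]
    rw [← lintegral_prod_swap]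
    refine (lintegral_prod_le _).trans ?_
    simp only [Prod.swap_prod_mk]
    refine le_trans ?_ (mul_le_mul_right hb2 (ENNReal.ofReal K))
    rw [← lintegral_const_mul' _ _ ENNReal.ofReal_ne_top]
    refine lintegral_mono fun w => ?_
    rw [← lintegral_const_mul' _ _ ENNReal.ofReal_ne_top]
    refine lintegral_mono_ae ?_
    filter_upwards [ae_ne_sub w] with v hv
    have hz : v - w ≠ 0 := fun hc => hv (by rw [← neg_sub, hc, neg_zero])
    have hT := Theta_bound k ε hε hε1 f h v w hz
    have hJ : (jap v ^ 3)⁻¹ = jap v ^ (-(3/2) : ℝ) * jap v ^ (-(3/2) : ℝ) := by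
      rw [← Real.rpow_add (jap_pos v), ← Real.rpow_natCast, ← Real.rpow_neg (jap_pos v).le]
      norm_num
    have hs2 : sing 2 (v - w) = sing 1 (v - w) ^ 2 := by
      unfold sing
      split_ifs <;> simp
    have hJ3 : jap w ^ (3 : ℝ) = jap w ^ 3 := by rw [← Real.rpow_natCast]; norm_num
    have p1 := sing_nonneg 1 (v - w)
    have p2 := PP_nonneg (wS k f) v
    have p3 := PP_nonneg (wS k h) v
    have p4 : 0 ≤ jap v ^ (-(3/2) : ℝ) := Real.rpow_nonneg (jap_pos v).le _
    have p5 : 0 ≤ jap v ^ k := Real.rpow_nonneg (jap_pos v).le _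
    have p6 : 0 ≤ RR k f v :=
      mul_nonneg (Real.rpow_nonneg (jap_pos v).le _) (by positivity)
    have p7 : 0 ≤ jap w ^ (3 : ℝ) := Real.rpow_nonneg (jap_pos w).le _
    have e2 : 2 + ENNReal.ofReal (sing 1 (v - w)) = ENNReal.ofReal (2 + sing 1 (v - w)) := by
      rw [ENNReal.ofReal_add (by norm_num) p1, ENNReal.ofReal_ofNat]
    rw [e2, ← ENNReal.ofReal_mul (by positivity),
      ← ENNReal.ofReal_mul (by positivity), ← ENNReal.ofReal_pow p1,
      ← ENNReal.ofReal_mul (by positivity), ← ENNReal.ofReal_mul (by positivity),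
      ← ENNReal.ofReal_mul (by positivity), ← ENNReal.ofReal_add (by positivity) (by positivity),
      ← ENNReal.ofReal_add (by positivity) (by positivity), ← ENNReal.ofReal_mul (by positivity),
      ← ENNReal.ofReal_mul (by positivity), ← ofReal_norm, Real.norm_eq_abs, abs_mul]
    refine ENNReal.ofReal_le_ofReal ?_
    refine (mul_le_mul_of_nonneg_right hT (abs_nonneg (g w))).trans (le_of_eq ?_)
    rw [hJ, hs2, hJ3, wS_apply k h v, abs_mul, abs_of_nonneg p5]
    ring
  refine hfin.trans ?_
  have q1 : 0 ≤ X * Y := by positivity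
  have q2 : 0 ≤ Z * Lh := by positivity
  have e : (K * (20 * I + 33 * S0) + 1) * Lg * (X * Y + Z * Lh) - K * M
      = 2 * (K * I * Lg * (X * Y)) + 18 * (K * I * Lg * (Z * Lh)) + 33 * (K * S0 * Lg * (Z * Lh))
        + Lg * (X * Y + Z * Lh) := by
    rw [hM]; ring
  have : 0 ≤ 2 * (K * I * Lg * (X * Y)) + 18 * (K * I * Lg * (Z * Lh))
      + 33 * (K * S0 * Lg * (Z * Lh)) + Lg * (X * Y + Z * Lh) := by positivity
  linarith

/-- for `k > 9/2` there is `C = C(k)` such that for all Schwartz `f, g, h`: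
`|⟨Q(g,f), h⟨v⟩^{2k}⟩| ≤ C ‖g‖_{L²_k} ( ‖f⟨v⟩^k‖_{𝖧¹_A} ‖h⟨v⟩^k‖_{𝖧¹_A} + ‖f‖_{H¹_{k−2}} ‖h‖_{L²_k} )`. -/
theorem landau_upper_bound_anisotropic (k : ℝ) (hk : 9 / 2 < k) :
    ∃ C > 0, ∀ f g h : SchwartzMap E3 ℝ,
      |pairL (landauQ (⇑g) (⇑f)) (fun v => h v * jap v ^ (2 * k))|
      ≤ C * Lpl 2 k (⇑g) *
          (HA (fun v => f v * jap v ^ k) * HA (fun v => h v * jap v ^ k)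
            + HSob 1 (k - 2) (⇑f) * Lpl 2 k (⇑h)) := by
  obtain ⟨C, hC, hb⟩ := weakT_bound hk
  refine ⟨C, hC, fun f g h => ?_⟩
  have e : ∀ (s : ℝ) (u : 𝓢(E3, ℝ)), (fun v => u v * jap v ^ s) = ⇑(wS s u) := fun s u =>
    funext fun v => by rw [wS_apply, mul_comm]
  rw [e, e, e, pairL_eq_weakT]
  refine le_of_tendsto (tendsto_weakT g f (wS (2 * k) h)).abs ?_
  have hmem : Set.Ioc (0 : ℝ) 1 ∈ nhdsWithin (0 : ℝ) (Set.Ioi 0) := Ioc_mem_nhdsGT one_pos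
  filter_upwards [hmem] with ε hε
  exact hb ε hε.1 hε.2 f g h
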